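/- arXiv:0907.2051 — 3 statements merged into one kernel-verified Lean document; each statement's English description precedes it below -/
import Mathlib

section
/- There exist absolute constants c > 0 and α ≥ 0 such that for every finite A ⊆ F_p with |A| ≥ p^{1/2} and |A| ≥ 2, one has max{|A+A|, |AA|} ≥ c(log|A|)^{−α} · min{ |A|^{13/12}(|A|/p^{1/2})^{1/12}, |A|(p/|A|)^{1/11} }. -/
open Finset Pointwise

lemma exists_nonempty_subset_ratio_min {α : Type*} [DecidableEq α] {X : Finset α}
    (hX : X.Nonempty) (w : Finset α → ℕ) :
    ∃ Z ⊆ X, Z.Nonempty ∧ ∀ Z' ⊆ X, w Z * #Z' ≤ w Z' * #Z ∨ Z' = ∅ := by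
  obtain ⟨Z, hZ, hmin⟩ := exists_min_image (X.powerset.erase ∅) (fun Z ↦ (w Z / #Z : ℚ))
    ⟨X, mem_erase_of_ne_of_mem hX.ne_empty (mem_powerset_self _)⟩
  rw [mem_erase, mem_powerset, ← nonempty_iff_ne_empty] at hZ
  refine ⟨Z, hZ.2, hZ.1, fun Z' hZ' ↦ ?_⟩
  obtain rfl | hne := Z'.eq_empty_or_nonempty
  · exact .inr rfl
  · have := hmin Z' (mem_erase_of_ne_of_mem hne.ne_empty (mem_powerset.2 hZ'))
    rw [div_le_div_iff₀ (mod_cast hZ.1.card_pos) (mod_cast hne.card_pos)] at this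
    exact .inl (mod_cast this)

section Sumsets

variable {G : Type*} [AddCommGroup G] [DecidableEq G]

lemma exists_subset_card_add_insert (X C : Finset G) (x : G) :
    ∃ D ⊆ X, #(X + insert x C) + #D = #(X + C) + #X ∧
      ∀ B : Finset G, #(X + B + insert x C) + #(D + B) ≤ #(X + B + C) + #(X + B) := by
  have hD : {a ∈ X | a + x ∈ X + C} + {x} = (X + {x}) ∩ (X + C) := by
    ext y
    constructor
    · intro hy
      obtain ⟨a, ha, b, hb, rfl⟩ := mem_add.1 hy
      rw [mem_filter] at ha
      rw [mem_singleton] at hb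
      subst hb
      exact mem_inter.2 ⟨add_mem_add ha.1 (mem_singleton_self _), ha.2⟩
    · intro hy
      obtain ⟨hy1, hy2⟩ := mem_inter.1 hy
      obtain ⟨a, ha, b, hb, rfl⟩ := mem_add.1 hy1
      rw [mem_singleton] at hb
      subst hb
      exact add_mem_add (mem_filter.2 ⟨ha, hy2⟩) (mem_singleton_self _)
  refine ⟨{a ∈ X | a + x ∈ X + C}, filter_subset _ _, ?_, fun B ↦ ?_⟩
  · rw [← card_add_singleton {a ∈ X | a + x ∈ X + C} x, hD, insert_eq, add_union,
      card_union_add_card_inter, card_add_singleton, add_comm]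
  · set D := {a ∈ X | a + x ∈ X + C}
    have hsub : D + B + {x} ⊆ (X + B + {x}) ∩ (X + B + C) := by
      rw [add_right_comm, hD, add_right_comm X B, add_right_comm X B]
      exact inter_add_subset
    have := card_le_card hsub
    rw [card_add_singleton] at this
    have h2 := card_union_add_card_inter (X + B + {x}) (X + B + C)
    rw [card_add_singleton] at h2
    rw [insert_eq, add_union]
    omega

/-- A weighted form of the Plünnecke-Petridis inequality. -/
lemma pluennecke_petridis_weighted {X B₁ B₂ : Finset G} {α β : ℕ}
    (hX : ∀ X' ⊆ X, (α * #(X + B₁) + β * #(X + B₂)) * #X' ≤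
      (α * #(X' + B₁) + β * #(X' + B₂)) * #X) (C : Finset G) :
    (α * #(X + B₁ + C) + β * #(X + B₂ + C)) * #X ≤
      (α * #(X + B₁) + β * #(X + B₂)) * #(X + C) := by
  induction C using Finset.induction_on with
  | empty => simp
  | insert x C _ ih =>
    obtain ⟨D, hDX, hD, hB⟩ := exists_subset_card_add_insert X C x
    have h1 := Nat.mul_le_mul_left (α * #X) (hB B₁)
    have h2 := Nat.mul_le_mul_left (β * #X) (hB B₂)
    have h3 := hX D hDX
    have h4 : (α * #(X + B₁) + β * #(X + B₂)) * (#(X + insert x C) + #D) =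
      (α * #(X + B₁) + β * #(X + B₂)) * (#(X + C) + #X) := by rw [hD]
    linarith

/-- The Plünnecke inequality with two different summands. -/
lemma exists_card_add_add_le {X B₁ B₂ : Finset G} (hX : X.Nonempty) (h₁ : B₁.Nonempty)
    (h₂ : B₂.Nonempty) :
    ∃ Z ⊆ X, Z.Nonempty ∧ #(Z + B₁ + B₂) * #X ^ 2 ≤ 4 * #(X + B₁) * #(X + B₂) * #Z := by
  set α := #(X + B₂) with hα
  set β := #(X + B₁) with hβ
  have hαpos : 0 < α := (hX.add h₂).card_pos
  have hβpos : 0 < β := (hX.add h₁).card_pos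
  obtain ⟨Z, hZX, hZ, hmin⟩ :=
    exists_nonempty_subset_ratio_min hX fun Z ↦ α * #(Z + B₁) + β * #(Z + B₂)
  refine ⟨Z, hZX, hZ, ?_⟩
  have hP := pluennecke_petridis_weighted (X := Z) (B₁ := B₁) (B₂ := B₂) (α := α) (β := β)
    (fun Z' hZ' ↦ (hmin Z' (hZ'.trans hZX)).elim id (by rintro rfl; simp)) B₂
  have hX' := (hmin X Subset.rfl).resolve_right hX.ne_empty
  simp only [← hα, ← hβ] at hX'
  set w := α * #(Z + B₁) + β * #(Z + B₂) with hw
  have hz := hZ.card_pos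
  have h1 : α * #(Z + B₁ + B₂) * #Z ≤ w * #(Z + B₂) := by
    refine le_trans ?_ hP
    gcongr
    omega
  have h2 : β * #(Z + B₂) ≤ w := by omega
  have h3 : α * β * #(Z + B₁ + B₂) * #Z ≤ w ^ 2 := by
    calc α * β * #(Z + B₁ + B₂) * #Z = β * (α * #(Z + B₁ + B₂) * #Z) := by ring
      _ ≤ β * (w * #(Z + B₂)) := by gcongr
      _ = w * (β * #(Z + B₂)) := by ring
      _ ≤ w * w := by gcongr
      _ = w ^ 2 := by ring
  have h4 : w * #X ≤ 2 * α * β * #Z := by linarith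
  have h5 : (α * β * #Z) * (#(Z + B₁ + B₂) * #X ^ 2) ≤
      (α * β * #Z) * (4 * β * α * #Z) := by
    calc (α * β * #Z) * (#(Z + B₁ + B₂) * #X ^ 2)
        = (α * β * #(Z + B₁ + B₂) * #Z) * #X ^ 2 := by ring
      _ ≤ w ^ 2 * #X ^ 2 := by gcongr
      _ = (w * #X) ^ 2 := by ring
      _ ≤ (2 * α * β * #Z) ^ 2 := by gcongr
      _ = _ := by ring
  exact Nat.le_of_mul_le_mul_left h5 (by positivity)

lemma exists_nonempty_subset_card_add_three_le {X : Finset G} (B : Finset G) (hX : X.Nonempty) :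
    ∃ Z ⊆ X, Z.Nonempty ∧ #(Z + (B + B + B)) * #X ^ 3 ≤ #(X + B) ^ 3 * #Z := by
  obtain ⟨Z, hZX, hZ, hmin⟩ := exists_nonempty_subset_ratio_min hX fun Z ↦ #(Z + B)
  have hP (C : Finset G) : #(C + Z + B) * #Z ≤ #(Z + B) * #(C + Z) :=
    pluennecke_petridis_inequality_add C
      fun Z' hZ' ↦ (hmin Z' (hZ'.trans hZX)).elim id (by rintro rfl; simp)
  have hX' := (hmin X Subset.rfl).resolve_right hX.ne_empty
  refine ⟨Z, hZX, hZ, ?_⟩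
  have e2 : B + B + Z + B = Z + (B + B + B) := by abel
  have e1 : B + Z + B = B + B + Z := by abel
  have h2 := hP (B + B)
  have h1 := hP B
  rw [e2] at h2
  rw [e1, add_comm B Z] at h1
  have hz := hZ.card_pos
  have h3 : #Z ^ 2 * (#(Z + (B + B + B)) * #X ^ 3) ≤ #Z ^ 2 * (#(X + B) ^ 3 * #Z) := by
    calc #Z ^ 2 * (#(Z + (B + B + B)) * #X ^ 3)
        = (#(Z + (B + B + B)) * #Z) * #Z * #X ^ 3 := by ring
      _ ≤ (#(Z + B) * #(B + B + Z)) * #Z * #X ^ 3 := by gcongr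
      _ = #(Z + B) * (#(B + B + Z) * #Z) * #X ^ 3 := by ring
      _ ≤ #(Z + B) * (#(Z + B) * #(Z + B)) * #X ^ 3 := by gcongr
      _ = (#(Z + B) * #X) ^ 3 := by ring
      _ ≤ (#(X + B) * #Z) ^ 3 := by gcongr
      _ = _ := by ring
  exact Nat.le_of_mul_le_mul_left h3 (by positivity)

/-- The Plünnecke inequality for a subset containing at least half of the original set. -/
lemma exists_large_subset_card_add_three_le (A : Finset G) :
    ∃ Z ⊆ A, #A ≤ 2 * #Z ∧ #(Z + (A + A + A)) * #A ^ 3 ≤ 8 * #(A + A) ^ 3 * #Z := by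
  obtain ⟨Z, hZ, hmax⟩ := exists_max_image
    {Z ∈ A.powerset | #(Z + (A + A + A)) * #A ^ 3 ≤ 8 * #(A + A) ^ 3 * #Z} card ⟨∅, by simp⟩
  simp only [mem_filter, mem_powerset] at hZ hmax
  refine ⟨Z, hZ.1, ?_, hZ.2⟩
  by_contra! hlt
  have hc := card_sdiff_add_card_eq_card hZ.1
  obtain ⟨W, hW, hWne, hWle⟩ := exists_nonempty_subset_card_add_three_le (X := A \ Z) A
    (card_pos.1 (by omega))
  have hdisj : Disjoint Z W := disjoint_of_subset_right hW disjoint_sdiff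
  have hcard : #(Z ∪ W) = #Z + #W := card_union_of_disjoint hdisj
  have := hmax (Z ∪ W) ⟨union_subset hZ.1 (hW.trans sdiff_subset), ?_⟩
  · have := hWne.card_pos
    omega
  have hsub : #(A \ Z + A) ≤ #(A + A) := card_le_card (add_subset_add_right sdiff_subset)
  have hW' : #(W + (A + A + A)) * #A ^ 3 ≤ 8 * #(A + A) ^ 3 * #W := by
    calc #(W + (A + A + A)) * #A ^ 3 ≤ #(W + (A + A + A)) * (2 * #(A \ Z)) ^ 3 := by
          gcongr
          omega
      _ = 8 * (#(W + (A + A + A)) * #(A \ Z) ^ 3) := by ring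
      _ ≤ 8 * (#(A \ Z + A) ^ 3 * #W) := by gcongr
      _ ≤ 8 * (#(A + A) ^ 3 * #W) := by gcongr
      _ = _ := by ring
  rw [union_add, hcard]
  calc #(Z + (A + A + A) ∪ (W + (A + A + A))) * #A ^ 3
      ≤ (#(Z + (A + A + A)) + #(W + (A + A + A))) * #A ^ 3 := by
        gcongr
        exact card_union_le _ _
    _ ≤ 8 * #(A + A) ^ 3 * (#Z + #W) := by linarith

/-- Greedy covering by translates. -/
lemma exists_cover_of_dense_translates {Y H : Finset G} {r : ℝ} (hr : 0 < r)
    (h : ∀ X ⊆ Y, X.Nonempty → ∃ t, (#X : ℝ) ≤ r * #(X ∩ ({t} + H))) :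
    ∀ X ⊆ Y, X.Nonempty → ∃ T : Finset G, X ⊆ T + H ∧ (#T : ℝ) ≤ (1 + Real.log #X) * r := by
  intro X
  induction X using Finset.strongInduction with
  | H X ih =>
    intro hXY hX
    obtain ⟨t, ht⟩ := h X hXY hX
    have hXpos : (0 : ℝ) < #X := mod_cast hX.card_pos
    have hsplit : (#(X \ ({t} + H)) : ℝ) + #(X ∩ ({t} + H)) = #X := by
      rw [← card_sdiff_add_card_inter X ({t} + H)]
      push_cast
      rfl
    have hr1 : 1 ≤ r := by
      have h1 : (#(X ∩ ({t} + H)) : ℝ) ≤ #X := mod_cast card_le_card inter_subset_left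
      by_contra! hlt
      nlinarith
    have hlog : 0 ≤ Real.log #X := Real.log_natCast_nonneg _
    obtain hempty | hne := (X \ ({t} + H)).eq_empty_or_nonempty
    · refine ⟨{t}, sdiff_eq_empty_iff_subset.1 hempty, ?_⟩
      rw [card_singleton]
      push_cast
      nlinarith
    · have hlt : X \ ({t} + H) ⊂ X := by
        refine ⟨sdiff_subset, fun hsub ↦ ?_⟩
        have h2 : (#X : ℝ) ≤ #(X \ ({t} + H)) := mod_cast card_le_card hsub
        nlinarith
      obtain ⟨T, hT, hTcard⟩ := ih _ hlt (sdiff_subset.trans hXY) hne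
      refine ⟨insert t T, ?_, ?_⟩
      · rw [insert_eq, union_add]
        intro x hx
        by_cases hxt : x ∈ {t} + H
        · exact mem_union_left _ hxt
        · exact mem_union_right _ (hT (mem_sdiff.2 ⟨hx, hxt⟩))
      · have hnepos : (0 : ℝ) < #(X \ ({t} + H)) := mod_cast hne.card_pos
        have hratio : (#(X \ ({t} + H)) : ℝ) / #X ≤ 1 - 1 / r := by
          rw [div_le_iff₀ hXpos]
          have : (#X : ℝ) / r ≤ #(X ∩ ({t} + H)) := by
            rw [div_le_iff₀ hr]; linarith
          have e : (1 - 1 / r) * (#X : ℝ) = #X - #X / r := by ring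
          rw [e]; linarith
        have hlog2 := Real.log_le_sub_one_of_pos (div_pos hnepos hXpos)
        rw [Real.log_div hnepos.ne' hXpos.ne'] at hlog2
        have hl : Real.log #(X \ ({t} + H)) ≤ Real.log #X - 1 / r := by linarith
        calc (#(insert t T) : ℝ) ≤ #T + 1 := mod_cast card_insert_le _ _
          _ ≤ (1 + Real.log #(X \ ({t} + H))) * r + 1 := by gcongr
          _ ≤ (1 + (Real.log #X - 1 / r)) * r + 1 := by gcongr
          _ = _ := by field_simp; ring

lemma card_filter_add_eq (X B : Finset G) (s : G) :
    #{x ∈ X ×ˢ B | x.1 + x.2 = s} = #(X ∩ ({s} + -B)) := by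
  refine card_nbij Prod.fst ?_ ?_ ?_
  · rintro ⟨a, b⟩ h
    simp only [coe_filter, mem_product, Set.mem_ofPred_eq, coe_inter, mem_coe,
      Set.mem_inter_iff] at h ⊢
    refine ⟨h.1.1, mem_add.2 ⟨s, mem_singleton_self _, -b, neg_mem_neg h.1.2, ?_⟩⟩
    rw [← h.2]
    abel
  · rintro ⟨a, b⟩ h ⟨a', b'⟩ h' (rfl : a = a')
    simp only [coe_filter, mem_product, Set.mem_ofPred_eq] at h h'
    rw [← h'.2, add_right_inj] at h
    rw [h.2]
  · rintro a h
    simp only [coe_inter, Set.mem_inter_iff, mem_coe] at h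
    obtain ⟨s', hs', b, hb, rfl⟩ := mem_add.1 h.2
    rw [mem_singleton] at hs'
    subst hs'
    refine ⟨(s' + b, -b), ?_, rfl⟩
    simp only [coe_filter, mem_product, Set.mem_ofPred_eq]
    exact ⟨⟨h.1, by simpa using hb⟩, by abel⟩

lemma exists_card_mul_card_le_neg (X B : Finset G) (hX : X.Nonempty) (hB : B.Nonempty) :
    ∃ t, #X * #B ≤ #(X + B) * #(X ∩ ({t} + -B)) := by
  have hcount : #(X ×ˢ B) = ∑ s ∈ X + B, #{x ∈ X ×ˢ B | x.1 + x.2 = s} :=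
    card_eq_sum_card_fiberwise fun x hx ↦ by
      simp only [coe_product, Set.mem_prod, mem_coe] at hx
      exact add_mem_add hx.1 hx.2
  obtain ⟨s, -, hs⟩ := exists_max_image (X + B) (fun s ↦ #{x ∈ X ×ˢ B | x.1 + x.2 = s})
    (hX.add hB)
  refine ⟨s, ?_⟩
  rw [← card_product, hcount, ← card_filter_add_eq, ← smul_eq_mul]
  exact sum_le_card_nsmul _ _ _ hs

lemma exists_card_mul_card_le (X B : Finset G) (hX : X.Nonempty) (hB : B.Nonempty) :
    ∃ t, #X * #B ≤ #(X + B) * #(X ∩ ({t} + B)) := by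
  have hE := le_card_add_mul_addEnergy X B
  obtain ⟨t, -, ht⟩ := exists_max_image (X - B) (fun t ↦ #(X ∩ ({t} + B))) (hX.sub hB)
  refine ⟨t, ?_⟩
  have hle : X.addEnergy B ≤ #X * #B * #(X ∩ ({t} + B)) := by
    rw [addEnergy_eq_card_filter, card_eq_sum_card_fiberwise (f := fun x ↦ (x.1.1, x.2.2))
      (t := X ×ˢ B), ← card_product, ← smul_eq_mul]
    · refine sum_le_card_nsmul _ _ _ fun y hy ↦ ?_
      rw [mem_product] at hy
      refine le_trans ?_ (ht (y.1 - y.2) (sub_mem_sub hy.1 hy.2))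
      refine card_le_card_of_injOn (fun x ↦ x.2.1) ?_ ?_
      · rintro ⟨⟨a, b⟩, c, d⟩ h
        simp only [coe_filter, mem_product, Set.mem_ofPred_eq, mem_filter] at h
        obtain ⟨⟨⟨⟨ha, hb⟩, hc, hd⟩, h⟩, rfl⟩ := h
        refine mem_coe.2 (mem_inter.2 ⟨hc, mem_add.2 ⟨a - d, mem_singleton_self _, b, hb, ?_⟩⟩)
        rw [sub_add_eq_add_sub, h, add_sub_cancel_right]
      · rintro ⟨⟨a, b⟩, c, d⟩ h ⟨⟨a', b'⟩, c', d'⟩ h' (rfl : c = c')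
        simp only [coe_filter, mem_product, Set.mem_ofPred_eq, mem_filter] at h h'
        obtain ⟨⟨-, h⟩, rfl⟩ := h
        obtain ⟨⟨-, h'⟩, h2⟩ := h'
        simp only [Prod.mk.injEq] at h2
        obtain ⟨rfl, rfl⟩ := h2
        rw [← h', add_right_inj] at h
        rw [h]
    · rintro ⟨⟨a, b⟩, c, d⟩ h
      simp only [coe_filter, mem_product, Set.mem_ofPred_eq] at h
      exact mem_coe.2 (mem_product.2 ⟨h.1.1.1, h.1.2.2⟩)
  refine Nat.le_of_mul_le_mul_left ?_ (mul_pos hX.card_pos hB.card_pos)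
  calc #X * #B * (#X * #B) = #X ^ 2 * #B ^ 2 := by ring
    _ ≤ #(X + B) * (#X * #B * #(X ∩ ({t} + B))) := hE.trans (by gcongr)
    _ = _ := by ring

lemma exists_cover_of_pos_mul_le {Y B H : Finset G} (hY : Y.Nonempty) (hB : B.Nonempty)
    (h : ∀ X : Finset G, X.Nonempty → ∃ t, #X * #B ≤ #(X + B) * #(X ∩ ({t} + H))) :
    ∃ T : Finset G, Y ⊆ T + H ∧ (#T : ℝ) * #B ≤ (1 + Real.log #Y) * #(Y + B) := by
  have hBpos : (0 : ℝ) < #B := mod_cast hB.card_pos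
  have hYB : (0 : ℝ) < #(Y + B) := mod_cast (hY.add hB).card_pos
  obtain ⟨T, hT, hTcard⟩ := exists_cover_of_dense_translates (Y := Y) (H := H)
    (r := #(Y + B) / #B) (by positivity) (fun X hX hXne ↦ by
      obtain ⟨t, ht⟩ := h X hXne
      refine ⟨t, ?_⟩
      rw [div_mul_eq_mul_div, le_div_iff₀ hBpos]
      have : #(X + B) * #(X ∩ ({t} + H)) ≤ #(Y + B) * #(X ∩ ({t} + H)) := by
        gcongr
      exact_mod_cast ht.trans this) Y Subset.rfl hY
  refine ⟨T, hT, ?_⟩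
  rwa [← mul_div_assoc, le_div_iff₀ hBpos] at hTcard

end Sumsets

lemma exists_popular_level {ι : Type*} (s : Finset ι) (f : ι → ℕ) {n : ℕ} (hn : 0 < n)
    (hf : ∀ i ∈ s, f i ≤ n) :
    ∃ N : ℕ, 1 ≤ N ∧
      ((∑ i ∈ s, f i : ℕ) : ℝ) ≤ (1 + Real.log n) * (N * #{i ∈ s | N ≤ f i}) := by
  obtain ⟨k, -, hk⟩ := exists_max_image (range n) (fun k ↦ (k + 1) * #{i ∈ s | k + 1 ≤ f i})
    ⟨0, by simpa using hn⟩
  refine ⟨k + 1, by omega, ?_⟩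
  have hsum : ∑ i ∈ s, f i = ∑ j ∈ range n, #{i ∈ s | j + 1 ≤ f i} := by
    simp_rw [card_filter]
    rw [sum_comm]
    refine sum_congr rfl fun i hi ↦ ?_
    rw [← card_filter]
    have : {j ∈ range n | j + 1 ≤ f i} = range (f i) := by
      ext j
      have := hf i hi
      simp only [mem_filter, mem_range]
      omega
    rw [this, card_range]
  rw [hsum]
  have hH := harmonic_le_one_add_log n
  rw [harmonic] at hH
  push_cast at hH ⊢
  refine le_trans ?_ (mul_le_mul_of_nonneg_right hH (by positivity))
  rw [sum_mul]
  refine sum_le_sum fun j hj ↦ ?_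
  have := hk j hj
  rw [inv_mul_eq_div, le_div_iff₀ (by positivity), mul_comm]
  exact_mod_cast this

lemma card_sq_le_card_image_mul {α β : Type*} [DecidableEq β] (s : Finset α) (f : α → β) :
    #s ^ 2 ≤ #(s.image f) * #{x ∈ s ×ˢ s | f x.1 = f x.2} := by
  have h : #{x ∈ s ×ˢ s | f x.1 = f x.2} = ∑ b ∈ s.image f, #{a ∈ s | f a = b} ^ 2 := by
    rw [card_eq_sum_card_fiberwise (f := fun x ↦ f x.1) (t := s.image f)]
    · refine sum_congr rfl fun b _ ↦ ?_
      rw [sq, ← card_product]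
      congr 1
      ext ⟨x, y⟩
      simp only [mem_filter, mem_product]
      grind
    · rintro ⟨x, y⟩ hx
      simp only [coe_filter, mem_product, Set.mem_ofPred_eq] at hx
      exact mem_coe.2 (mem_image_of_mem f hx.1.1)
  rw [h, card_eq_sum_card_image f s]
  exact mod_cast sq_sum_le_card_mul_sum_sq (s := s.image f) (f := fun b ↦ #{a ∈ s | f a = b})

section Field

variable {F : Type*} [Field F] [DecidableEq F]

lemma mulEnergy_le_sum {A A' : Finset F} (hA : 0 ∉ A) :
    A.mulEnergy A' ≤ ∑ x ∈ A ×ˢ A', #{z ∈ A | x.2 / x.1 * z ∈ A'} := by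
  rw [mulEnergy_eq_card_filter, card_eq_sum_card_fiberwise (f := fun x ↦ (x.2.1, x.1.2))
    (t := A ×ˢ A')]
  · refine sum_le_sum fun y hy ↦ ?_
    refine card_le_card_of_injOn (fun x ↦ x.1.1) ?_ ?_
    · rintro ⟨⟨a, b⟩, c, d⟩ h
      simp only [coe_filter, mem_product, Set.mem_ofPred_eq, mem_filter] at h
      obtain ⟨⟨⟨⟨ha, hb⟩, hc, hd⟩, h⟩, rfl⟩ := h
      have hc0 : c ≠ 0 := by rintro rfl; exact hA hc
      simp only [coe_filter, Set.mem_ofPred_eq]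
      refine ⟨ha, ?_⟩
      rwa [div_mul_eq_mul_div, mul_comm b, h, mul_div_cancel_left₀ _ hc0]
    · rintro ⟨⟨a, b⟩, c, d⟩ h ⟨⟨a', b'⟩, c', d'⟩ h' (rfl : a = a')
      simp only [coe_filter, mem_product, Set.mem_ofPred_eq, mem_filter] at h h'
      obtain ⟨⟨⟨-, hc, -⟩, h⟩, rfl⟩ := h
      obtain ⟨⟨-, h'⟩, h2⟩ := h'
      simp only [Prod.mk.injEq] at h2
      obtain ⟨rfl, rfl⟩ := h2
      have hc0 : c' ≠ 0 := by rintro rfl; exact hA hc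
      rw [h', mul_right_inj' hc0] at h
      rw [h]
  · rintro ⟨⟨a, b⟩, c, d⟩ h
    simp only [coe_filter, mem_product, Set.mem_ofPred_eq] at h
    exact mem_coe.2 (mem_product.2 ⟨h.1.2.1, h.1.1.2⟩)

/-- Some vertical line meets many popular lines through the origin. -/
lemma exists_popular_dilates {A A' : Finset F} (hA0 : 0 ∉ A) (hA : A.Nonempty) :
    ∃ x ∈ A, ∃ N : ℕ, 1 ≤ N ∧ (#A : ℝ) * #A' ^ 2 ≤
      #(A * A') * ((1 + Real.log #A) * (N * #{y ∈ A' | N ≤ #{z ∈ A | y / x * z ∈ A'}})) := by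
  obtain ⟨N, hN, hle⟩ := exists_popular_level (A ×ˢ A')
    (fun x ↦ #{z ∈ A | x.2 / x.1 * z ∈ A'}) hA.card_pos
    (fun x _ ↦ card_le_card (filter_subset _ _))
  obtain ⟨x, hx, hmax⟩ := exists_max_image A
    (fun x ↦ #{y ∈ A' | N ≤ #{z ∈ A | y / x * z ∈ A'}}) hA
  refine ⟨x, hx, N, hN, ?_⟩
  have hsplit : #{i ∈ A ×ˢ A' | N ≤ #{z ∈ A | i.2 / i.1 * z ∈ A'}} ≤
      #A * #{y ∈ A' | N ≤ #{z ∈ A | y / x * z ∈ A'}} := by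
    rw [card_filter, sum_product, ← smul_eq_mul]
    refine sum_le_card_nsmul _ _ _ fun a ha ↦ ?_
    rw [← card_filter]
    exact hmax a ha
  have hE := le_card_mul_mul_mulEnergy A A'
  have hE' := hE.trans (Nat.mul_le_mul_left _ (mulEnergy_le_sum hA0))
  have hApos : (0 : ℝ) < #A := mod_cast hA.card_pos
  have hlog : 0 ≤ Real.log #A := Real.log_natCast_nonneg _
  refine le_of_mul_le_mul_left ?_ hApos
  calc (#A : ℝ) * (#A * #A' ^ 2) = #A ^ 2 * #A' ^ 2 := by ring
    _ ≤ (#(A * A') : ℝ) * (∑ x ∈ A ×ˢ A', #{z ∈ A | x.2 / x.1 * z ∈ A'} : ℕ) := by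
      exact_mod_cast hE'
    _ ≤ (#(A * A') : ℝ) * ((1 + Real.log #A) *
        (N * (#A * #{y ∈ A' | N ≤ #{z ∈ A | y / x * z ∈ A'}} : ℕ))) := by
      refine mul_le_mul_of_nonneg_left (hle.trans ?_) (by positivity)
      gcongr
    _ = _ := by push_cast; ring

lemma smul_subset_add_of_cover {Y T B H : Finset F} {y : F} (hT : Y ⊆ T + B) (hB : y • B ⊆ H) :
    y • Y ⊆ y • T + H := by
  intro w hw
  obtain ⟨v, hv, rfl⟩ := mem_smul_finset.1 hw
  obtain ⟨t, ht, b, hb, rfl⟩ := mem_add.1 (hT hv)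
  rw [smul_add]
  exact add_mem_add (smul_mem_smul_finset ht) (hB (smul_mem_smul_finset hb))

lemma neg_smul_finset_subset {B H : Finset F} {y : F} (hB : y • B ⊆ H) : (-y) • -B ⊆ H := by
  intro w hw
  obtain ⟨v, hv, rfl⟩ := mem_smul_finset.1 hw
  rw [smul_eq_mul, neg_mul, ← mul_neg]
  exact hB (smul_mem_smul_finset (by simpa using hv))

/-- If `y • B` lies in `H` then both `y • Y` and `-y • Y` are covered by few translates of `H`. -/
lemma exists_cover_smul {A Y B H : Finset F} {y : F} {N : ℕ} (hY : Y.Nonempty) (hYA : Y ⊆ A)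
    (hBA : B ⊆ A) (hN : 1 ≤ N) (hNB : N ≤ #B) (hB : y • B ⊆ H) :
    (∃ T : Finset F, y • Y ⊆ T + H ∧ (#T : ℝ) * N ≤ (1 + Real.log #A) * #(A + A)) ∧
      ∃ T : Finset F, (-y) • Y ⊆ T + H ∧ (#T : ℝ) * N ≤ (1 + Real.log #A) * #(A + A) := by
  have hBne : B.Nonempty := card_pos.1 (by omega)
  have hlog : Real.log #Y ≤ Real.log #A :=
    Real.log_le_log (mod_cast hY.card_pos) (mod_cast card_le_card hYA)
  have hlogA : 0 ≤ Real.log #A := Real.log_natCast_nonneg _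
  have key (T : Finset F) (z : F) (hT : (#T : ℝ) * #B ≤ (1 + Real.log #Y) * #(Y + B)) :
      (#(z • T) : ℝ) * N ≤ (1 + Real.log #A) * #(A + A) := by
    have h1 : #(z • T) ≤ #T := card_image_le
    calc (#(z • T) : ℝ) * N ≤ #T * #B := by gcongr
      _ ≤ (1 + Real.log #Y) * #(Y + B) := hT
      _ ≤ (1 + Real.log #A) * #(A + A) := by gcongr
  constructor
  · obtain ⟨T, hT, hc⟩ := exists_cover_of_pos_mul_le hY hBne
      fun X hX ↦ exists_card_mul_card_le X B hX hBne
    exact ⟨y • T, smul_subset_add_of_cover hT hB, key T y hc⟩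
  · obtain ⟨T, hT, hc⟩ := exists_cover_of_pos_mul_le hY hBne
      fun X hX ↦ exists_card_mul_card_le_neg X B hX hBne
    exact ⟨(-y) • T, smul_subset_add_of_cover hT (neg_smul_finset_subset hB), key T (-y) hc⟩

lemma card_four_dilates_le {A A' Y : Finset F} {x : F} {N : ℕ} (hx : x ≠ 0) (hN : 1 ≤ N)
    (hA' : A' ⊆ A) (hYA : Y ⊆ A) (hY : ∀ y ∈ Y, N ≤ #{z ∈ A | y / x * z ∈ A'}) {a b c d : F}
    (ha : a ∈ Y) (hb : b ∈ Y) (hc : c ∈ Y) (hd : d ∈ Y) :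
    (#(a • Y + (-b) • Y + c • Y + (-d) • Y) : ℝ) * N ^ 4 ≤
      ((1 + Real.log #A) * #(A + A)) ^ 4 * #(A' + (A + A + A)) := by
  have hdil (y : F) : y • ({z ∈ A | y / x * z ∈ A'}) ⊆ x • A' := by
    intro w hw
    obtain ⟨v, hv, rfl⟩ := mem_smul_finset.1 hw
    refine mem_smul_finset.2 ⟨_, (mem_filter.1 hv).2, ?_⟩
    simp only [smul_eq_mul]
    field_simp
  have hcov (y : F) (hy : y ∈ Y) :=
    exists_cover_smul ⟨y, hy⟩ hYA (filter_subset _ _) hN (hY y hy) (hdil y)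
  obtain ⟨Ta, hTa, hca⟩ := (hcov a ha).1
  obtain ⟨Tb, hTb, hcb⟩ := (hcov b hb).2
  obtain ⟨Tc, hTc, hcc⟩ := (hcov c hc).1
  obtain ⟨Td, hTd, hcd⟩ := (hcov d hd).2
  have hsub : a • Y + (-b) • Y + c • Y + (-d) • Y ⊆
      Ta + Tb + Tc + Td + x • (A' + (A + A + A)) := by
    have hxA : x • A' ⊆ x • A := smul_finset_subset_smul_finset hA'
    calc a • Y + (-b) • Y + c • Y + (-d) • Y
        ⊆ (Ta + x • A') + (Tb + x • A) + (Tc + x • A) + (Td + x • A) := by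
          refine add_subset_add (add_subset_add (add_subset_add hTa ?_) ?_) ?_
          · exact hTb.trans (add_subset_add_left hxA)
          · exact hTc.trans (add_subset_add_left hxA)
          · exact hTd.trans (add_subset_add_left hxA)
      _ = _ := by
          simp only [smul_add]
          abel
  have hcard : #(a • Y + (-b) • Y + c • Y + (-d) • Y) ≤
      #Ta * #Tb * #Tc * #Td * #(A' + (A + A + A)) := by
    refine (card_le_card hsub).trans (card_add_le.trans ?_)
    rw [card_smul_finset₀ hx]
    gcongr
    exact card_add_le.trans (by gcongr; exact card_add_le.trans (by gcongr; exact card_add_le))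
  calc (#(a • Y + (-b) • Y + c • Y + (-d) • Y) : ℝ) * N ^ 4
      ≤ (#Ta * #Tb * #Tc * #Td * #(A' + (A + A + A)) : ℕ) * (N : ℝ) ^ 4 := by gcongr
    _ = ((#Ta : ℝ) * N) * (#Tb * N) * (#Tc * N) * (#Td * N) * #(A' + (A + A + A)) := by
      push_cast; ring
    _ ≤ ((1 + Real.log #A) * #(A + A)) * ((1 + Real.log #A) * #(A + A)) *
        ((1 + Real.log #A) * #(A + A)) * ((1 + Real.log #A) * #(A + A)) *
        #(A' + (A + A + A)) := by gcongr
    _ = _ := by ring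

lemma exists_card_add_smul_ge [Fintype F] (Y : Finset F) :
    ∃ ξ : F, #Y ^ 2 * Fintype.card F ≤ #(Y + ξ • Y) * (Fintype.card F + #Y ^ 2) := by
  set e : F → ℕ := fun ξ ↦
    #{x ∈ (Y ×ˢ Y) ×ˢ (Y ×ˢ Y) | x.1.1 + ξ * x.1.2 = x.2.1 + ξ * x.2.2} with he
  have hCS (ξ : F) : (#Y ^ 2) ^ 2 ≤ #(Y + ξ • Y) * e ξ := by
    have := card_sq_le_card_image_mul (Y ×ˢ Y) fun x ↦ x.1 + ξ * x.2
    rw [card_product, ← sq] at this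
    refine this.trans ?_
    gcongr
    intro w hw
    obtain ⟨v, hv, rfl⟩ := mem_image.1 hw
    rw [mem_product] at hv
    exact add_mem_add hv.1 (smul_mem_smul_finset hv.2)
  have hsum : ∑ ξ, e ξ ≤ #Y ^ 2 * (Fintype.card F + #Y ^ 2) := by
    simp only [he, card_filter]
    rw [sum_comm]
    have hterm (x : (F × F) × (F × F)) :
        (∑ ξ : F, if x.1.1 + ξ * x.1.2 = x.2.1 + ξ * x.2.2 then 1 else 0) ≤
          (if x.1 = x.2 then Fintype.card F else 0) + 1 := by
      obtain ⟨⟨a, b⟩, c, d⟩ := x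
      rw [← card_filter]
      by_cases h : (a, b) = (c, d)
      · rw [if_pos h]
        exact (card_le_univ _).trans (Nat.le_succ _)
      · rw [if_neg h, zero_add, card_le_one]
        simp only [mem_filter, mem_univ, true_and]
        intro ξ hξ η hη
        have hbd : b ≠ d := by
          rintro rfl
          rw [add_left_inj] at hξ
          exact h (by rw [hξ])
        have : (ξ - η) * (b - d) = 0 := by linear_combination hξ - hη
        rcases mul_eq_zero.1 this with h | h
        · exact sub_eq_zero.1 h
        · exact absurd (sub_eq_zero.1 h) hbd
    refine (sum_le_sum fun x _ ↦ hterm x).trans ?_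
    rw [sum_add_distrib, sum_product]
    simp only [sum_ite_eq, sum_const, card_product, smul_eq_mul, mul_one]
    have : ∑ x ∈ Y ×ˢ Y, (if x ∈ Y ×ˢ Y then Fintype.card F else 0) =
        #Y * #Y * Fintype.card F := by
      rw [sum_congr rfl fun x hx ↦ if_pos hx, sum_const, card_product, smul_eq_mul]
    rw [this]
    exact le_of_eq (by ring)
  obtain ⟨ξ, -, hξ⟩ := exists_min_image univ e ⟨0, mem_univ _⟩
  refine ⟨ξ, ?_⟩
  have hmin : Fintype.card F * e ξ ≤ #Y ^ 2 * (Fintype.card F + #Y ^ 2) := by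
    refine le_trans ?_ hsum
    rw [← smul_eq_mul]
    exact card_nsmul_le_sum _ _ _ fun η _ ↦ hξ η (mem_univ _)
  obtain h0 | hpos := Nat.eq_zero_or_pos #Y
  · simp [h0]
  refine Nat.le_of_mul_le_mul_left ?_ (pow_pos hpos 2)
  calc #Y ^ 2 * (#Y ^ 2 * Fintype.card F) = (#Y ^ 2) ^ 2 * Fintype.card F := by ring
    _ ≤ #(Y + ξ • Y) * e ξ * Fintype.card F := by gcongr; exact hCS ξ
    _ = #(Y + ξ • Y) * (Fintype.card F * e ξ) := by ring
    _ ≤ #(Y + ξ • Y) * (#Y ^ 2 * (Fintype.card F + #Y ^ 2)) := by gcongr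
    _ = _ := by ring

lemma card_mul_card_le_card_add_smul {X Y : Finset F} {ξ : F}
    (h : ∀ a ∈ X, ∀ b ∈ X, ∀ c ∈ Y, ∀ d ∈ Y, c ≠ d → ξ * (c - d) ≠ a - b) :
    #X * #Y ≤ #(X + ξ • Y) := by
  rw [← card_product]
  refine card_le_card_of_injOn (fun x ↦ x.1 + ξ * x.2) ?_ ?_
  · rintro ⟨a, c⟩ hx
    simp only [coe_product, Set.mem_prod, mem_coe] at hx
    exact mem_coe.2 (add_mem_add hx.1 (smul_mem_smul_finset hx.2))
  · rintro ⟨a, d⟩ hu ⟨b, c⟩ hv huv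
    simp only [coe_product, Set.mem_prod, mem_coe] at hu hv huv
    have hcd : c = d := by
      by_contra hne
      exact h a hu.1 b hv.1 c hv.2 d hu.2 hne (by linear_combination -huv)
    subst hcd
    rw [add_left_inj] at huv
    rw [huv]

end Field

section PrimeField

variable {p : ℕ} [Fact p.Prime]

/-- Growth of a set `Y` under addition and dilation by differences, depending on whether the
quotient set `(Y - Y) / (Y - Y)` is the whole field. -/
lemma card_pow_le_of_card_four_dilates_le {Y : Finset (ZMod p)} {Q : ℕ} (hY : 2 ≤ #Y)
    (hQ : ∀ a ∈ Y, ∀ b ∈ Y, ∀ c ∈ Y, ∀ d ∈ Y,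
      #(a • Y + (-b) • Y + c • Y + (-d) • Y) ≤ Q) :
    #Y ^ 2 * p ≤ Q * (p + #Y ^ 2) ∨ #Y ^ 2 ≤ p ∧ #Y ^ 3 ≤ 4 * #(Y + Y) * Q := by
  have hdilate (a b c d : ZMod p) (ha : a ∈ Y) (hb : b ∈ Y) (hc : c ∈ Y) (hd : d ∈ Y) :
      #((c - d) • Y + (a - b) • Y) ≤ Q := by
    refine (card_le_card ?_).trans (hQ a ha b hb c hc d hd)
    intro w hw
    obtain ⟨u, hu, v, hv, rfl⟩ := mem_add.1 hw
    obtain ⟨y, hy, rfl⟩ := mem_smul_finset.1 hu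
    obtain ⟨z, hz, rfl⟩ := mem_smul_finset.1 hv
    have : (c - d) • y + (a - b) • z = a • z + (-b) • z + c • y + (-d) • y := by
      simp only [smul_eq_mul]; ring
    rw [this]
    exact add_mem_add (add_mem_add (add_mem_add (smul_mem_smul_finset hz)
      (smul_mem_smul_finset hz)) (smul_mem_smul_finset hy)) (smul_mem_smul_finset hy)
  obtain ⟨y₁, hy₁, y₂, hy₂, hne⟩ := one_lt_card.1 hY
  by_cases hR : ∀ ξ : ZMod p, ∃ a ∈ Y, ∃ b ∈ Y, ∃ c ∈ Y, ∃ d ∈ Y, c ≠ d ∧ ξ * (c - d) = a - b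
  · left
    obtain ⟨ξ, hξ⟩ := exists_card_add_smul_ge Y
    rw [ZMod.card] at hξ
    obtain ⟨a, ha, b, hb, c, hc, d, hd, hcd, h⟩ := hR ξ
    refine hξ.trans (Nat.mul_le_mul_right _ ?_)
    have hcd' : c - d ≠ 0 := sub_ne_zero.2 hcd
    calc #(Y + ξ • Y) = #((c - d) • (Y + ξ • Y)) := (card_smul_finset₀ hcd' _).symm
      _ = #((c - d) • Y + (a - b) • Y) := by rw [smul_add, smul_smul, mul_comm, h]
      _ ≤ Q := hdilate a b c d ha hb hc hd
  · right
    have hstep : ∃ ξ : ZMod p,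
        (∃ a ∈ Y, ∃ b ∈ Y, ∃ c ∈ Y, ∃ d ∈ Y, c ≠ d ∧ ξ * (c - d) = a - b) ∧
        ¬ ∃ a ∈ Y, ∃ b ∈ Y, ∃ c ∈ Y, ∃ d ∈ Y, c ≠ d ∧ (1 + ξ) * (c - d) = a - b := by
      by_contra! hcon
      refine hR fun ξ ↦ ?_
      rw [← ZMod.natCast_zmod_val ξ]
      generalize ξ.val = n
      induction n with
      | zero => exact ⟨y₁, hy₁, y₁, hy₁, y₁, hy₁, y₂, hy₂, hne, by simp⟩
      | succ n ih =>
        obtain ⟨a, ha, b, hb, c, hc, d, hd, h⟩ := ih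
        rw [Nat.cast_succ, add_comm]
        exact hcon n ⟨a, ha, b, hb, c, hc, d, hd, h⟩
    obtain ⟨ξ, ⟨a, ha, b, hb, c, hc, d, hd, hcd, h⟩, hnot⟩ := hstep
    have hnot' : ∀ a ∈ Y, ∀ b ∈ Y, ∀ c ∈ Y, ∀ d ∈ Y, c ≠ d → (1 + ξ) * (c - d) ≠ a - b := by
      push Not at hnot
      exact hnot
    constructor
    · have h1 := card_mul_card_le_card_add_smul hnot'
      rw [← sq] at h1
      exact h1.trans ((card_le_univ _).trans_eq (ZMod.card p))
    have hcd' : c - d ≠ 0 := sub_ne_zero.2 hcd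
    have hYne : Y.Nonempty := ⟨a, ha⟩
    obtain ⟨Z, hZY, hZ, hle⟩ := exists_card_add_add_le hYne hYne (B₂ := ξ • Y) hYne.smul_finset
    have hQ' : #(Y + ξ • Y) ≤ Q := by
      calc #(Y + ξ • Y) = #((c - d) • (Y + ξ • Y)) := (card_smul_finset₀ hcd' _).symm
        _ = #((c - d) • Y + (a - b) • Y) := by rw [smul_add, smul_smul, mul_comm, h]
        _ ≤ Q := hdilate a b c d ha hb hc hd
    have hinj : #Z * #Y ≤ #(Z + Y + ξ • Y) := by
      refine (card_mul_card_le_card_add_smul fun a ha b hb ↦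
        hnot' a (hZY ha) b (hZY hb)).trans (card_le_card ?_)
      rw [add_assoc]
      refine add_subset_add_left ?_
      intro w hw
      obtain ⟨v, hv, rfl⟩ := mem_smul_finset.1 hw
      rw [add_smul, one_smul]
      exact add_mem_add hv (smul_mem_smul_finset hv)
    refine Nat.le_of_mul_le_mul_left ?_ hZ.card_pos
    calc #Z * #Y ^ 3 = #Z * #Y * #Y ^ 2 := by ring
      _ ≤ #(Z + Y + ξ • Y) * #Y ^ 2 := by gcongr
      _ ≤ 4 * #(Y + Y) * #(Y + ξ • Y) * #Z := hle
      _ ≤ 4 * #(Y + Y) * Q * #Z := by gcongr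
      _ = _ := by ring

lemma polynomial_growth_of_growth {n M ℓ N u Q q : ℝ} (hn : 1 ≤ n) (hnM : n ≤ M) (hℓ : 1 ≤ ℓ)
    (hN : 0 ≤ N) (hu : 0 ≤ u) (hq : 0 < q) (hun : u ≤ n)
    (h : n ^ 3 ≤ 4 * ℓ * M * N * u) (hQ : Q * N ^ 4 * n ^ 2 ≤ 8 * ℓ ^ 4 * M ^ 7)
    (hcases : u ^ 2 * q ≤ Q * (q + u ^ 2) ∨ u ^ 2 ≤ q ∧ u ^ 3 ≤ 4 * M * Q) :
    q * n ^ 10 ≤ 2 ^ 13 * ℓ ^ 8 * M ^ 11 ∨ n ^ 12 ≤ 2 ^ 13 * ℓ ^ 8 * M ^ 11 ∨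
      n ^ 14 ≤ 2 ^ 13 * ℓ ^ 8 * M ^ 12 * √q := by
  have hM : 1 ≤ M := hn.trans hnM
  have hn2 : n ^ 2 ≤ 4 * ℓ * M * N := by
    refine le_of_mul_le_mul_right ?_ (by linarith : 0 < n)
    calc n ^ 2 * n = n ^ 3 := by ring
      _ ≤ 4 * ℓ * M * N * u := h
      _ ≤ 4 * ℓ * M * N * n := by gcongr
  have hnonneg : 0 ≤ ℓ ^ 8 * M ^ 11 := by positivity
  rcases hcases with hc | ⟨huq, hc⟩
  · have hQ0 : 0 ≤ Q := by
      by_contra! hneg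
      have : Q * (q + u ^ 2) < 0 := mul_neg_of_neg_of_pos hneg (by positivity)
      have : 0 ≤ u ^ 2 * q := by positivity
      linarith
    by_cases huq : u ^ 2 ≤ q
    · have huQ : u ^ 2 ≤ 2 * Q := by
        refine le_of_mul_le_mul_right (hc.trans ?_) hq
        nlinarith
      right; left
      calc n ^ 12 = (n ^ 3) ^ 2 * (n ^ 2) ^ 2 * n ^ 2 := by ring
        _ ≤ (4 * ℓ * M * N * u) ^ 2 * (4 * ℓ * M * N) ^ 2 * n ^ 2 := by gcongr
        _ = 256 * ℓ ^ 4 * M ^ 4 * (u ^ 2 * (N ^ 4 * n ^ 2)) := by ring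
        _ ≤ 256 * ℓ ^ 4 * M ^ 4 * (2 * Q * (N ^ 4 * n ^ 2)) := by gcongr
        _ = 512 * ℓ ^ 4 * M ^ 4 * (Q * N ^ 4 * n ^ 2) := by ring
        _ ≤ 512 * ℓ ^ 4 * M ^ 4 * (8 * ℓ ^ 4 * M ^ 7) := by gcongr
        _ = 4096 * (ℓ ^ 8 * M ^ 11) := by ring
        _ ≤ 2 ^ 13 * ℓ ^ 8 * M ^ 11 := by linarith
    · have hqQ : q ≤ 2 * Q := by
        push Not at huq
        refine le_of_mul_le_mul_left (hc.trans ?_) (hq.trans huq)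
        nlinarith
      left
      calc q * n ^ 10 = q * n ^ 2 * (n ^ 2) ^ 4 := by ring
        _ ≤ q * n ^ 2 * (4 * ℓ * M * N) ^ 4 := by gcongr
        _ = 256 * ℓ ^ 4 * M ^ 4 * (q * (N ^ 4 * n ^ 2)) := by ring
        _ ≤ 256 * ℓ ^ 4 * M ^ 4 * (2 * Q * (N ^ 4 * n ^ 2)) := by gcongr
        _ = 512 * ℓ ^ 4 * M ^ 4 * (Q * N ^ 4 * n ^ 2) := by ring
        _ ≤ 512 * ℓ ^ 4 * M ^ 4 * (8 * ℓ ^ 4 * M ^ 7) := by gcongr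
        _ = 4096 * (ℓ ^ 8 * M ^ 11) := by ring
        _ ≤ 2 ^ 13 * ℓ ^ 8 * M ^ 11 := by linarith
  · right; right
    have hus : u ≤ √q := Real.le_sqrt_of_sq_le huq
    calc n ^ 14 = (n ^ 3) ^ 4 * n ^ 2 := by ring
      _ ≤ (4 * ℓ * M * N * u) ^ 4 * n ^ 2 := by gcongr
      _ = 256 * ℓ ^ 4 * M ^ 4 * (u * (u ^ 3 * (N ^ 4 * n ^ 2))) := by ring
      _ ≤ 256 * ℓ ^ 4 * M ^ 4 * (√q * (4 * M * Q * (N ^ 4 * n ^ 2))) := by gcongr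
      _ = 1024 * ℓ ^ 4 * M ^ 5 * √q * (Q * N ^ 4 * n ^ 2) := by ring
      _ ≤ 1024 * ℓ ^ 4 * M ^ 5 * √q * (8 * ℓ ^ 4 * M ^ 7) := by gcongr
      _ = _ := by ring

lemma polynomial_growth {A : Finset (ZMod p)} (hA0 : 0 ∉ A) (hA : A.Nonempty) {M : ℝ}
    (hadd : (#(A + A) : ℝ) ≤ M) (hmul : (#(A * A) : ℝ) ≤ M) :
    p * (#A : ℝ) ^ 10 ≤ 2 ^ 13 * (1 + Real.log #A) ^ 8 * M ^ 11 ∨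
      (#A : ℝ) ^ 12 ≤ 2 ^ 13 * (1 + Real.log #A) ^ 8 * M ^ 11 ∨
      (#A : ℝ) ^ 14 ≤ 2 ^ 13 * (1 + Real.log #A) ^ 8 * M ^ 12 * √p := by
  obtain ⟨A', hA', hhalf, hplu⟩ := exists_large_subset_card_add_three_le A
  obtain ⟨x, hx, N, hN, hpop⟩ := exists_popular_dilates (A' := A') hA0 hA
  set Y := {y ∈ A' | N ≤ #{z ∈ A | y / x * z ∈ A'}} with hYdef
  have hYA : Y ⊆ A := (filter_subset _ _).trans hA'
  have hx0 : x ≠ 0 := by rintro rfl; exact hA0 hx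
  have hn : (1 : ℝ) ≤ #A := mod_cast hA.card_pos
  have hnM : (#A : ℝ) ≤ M := le_trans (mod_cast card_le_card_add_left hA) hadd
  have hM : 1 ≤ M := hn.trans hnM
  have hℓ : 1 ≤ 1 + Real.log #A := by linarith [Real.log_natCast_nonneg #A]
  set ℓ := 1 + Real.log (#A : ℝ) with hℓdef
  have hun : (#Y : ℝ) ≤ #A := mod_cast card_le_card hYA
  have hmul' : (#(A * A') : ℝ) ≤ M :=
    le_trans (mod_cast card_le_card (mul_subset_mul_left hA')) hmul
  have hhalf' : (#A : ℝ) ≤ 2 * #A' := mod_cast hhalf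
  have hcube : (#A : ℝ) ^ 3 ≤ 4 * ℓ * M * N * #Y := by
    calc (#A : ℝ) ^ 3 = (#A : ℝ) * #A ^ 2 := by ring
      _ ≤ (#A : ℝ) * (2 * #A') ^ 2 := by gcongr
      _ = 4 * ((#A : ℝ) * #A' ^ 2) := by ring
      _ ≤ 4 * (#(A * A') * (ℓ * (N * #Y))) := by gcongr
      _ ≤ 4 * (M * (ℓ * (N * #Y))) := by gcongr
      _ = _ := by ring
  have hNpos : (0 : ℝ) < N := mod_cast hN
  by_cases hY2 : 2 ≤ #Y
  · have hthree : (#(A' + (A + A + A)) : ℝ) * #A ^ 2 ≤ 8 * M ^ 3 := by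
      refine le_of_mul_le_mul_right ?_ (by linarith : (0 : ℝ) < #A)
      calc (#(A' + (A + A + A)) : ℝ) * #A ^ 2 * #A
          = (#(A' + (A + A + A)) : ℝ) * #A ^ 3 := by ring
        _ ≤ 8 * (#(A + A) : ℝ) ^ 3 * #A' := by exact_mod_cast hplu
        _ ≤ 8 * M ^ 3 * #A := by gcongr
    set R : ℝ := 8 * ℓ ^ 4 * M ^ 7 / (N ^ 4 * #A ^ 2) with hR
    have hR0 : 0 ≤ R := by positivity
    have hbound : ∀ a ∈ Y, ∀ b ∈ Y, ∀ c ∈ Y, ∀ d ∈ Y,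
        #(a • Y + (-b) • Y + c • Y + (-d) • Y) ≤ ⌊R⌋₊ := by
      intro a ha b hb c hc d hd
      refine Nat.le_floor ?_
      rw [hR, le_div_iff₀ (by positivity)]
      have h4 := card_four_dilates_le hx0 hN hA' hYA (fun y hy ↦ (mem_filter.1 hy).2) ha hb hc hd
      rw [← hℓdef] at h4
      calc (#(a • Y + (-b) • Y + c • Y + (-d) • Y) : ℝ) * (N ^ 4 * #A ^ 2)
          = #(a • Y + (-b) • Y + c • Y + (-d) • Y) * N ^ 4 * #A ^ 2 := by ring
        _ ≤ (ℓ * #(A + A)) ^ 4 * #(A' + (A + A + A)) * #A ^ 2 := by gcongr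
        _ = (ℓ * #(A + A)) ^ 4 * (#(A' + (A + A + A)) * #A ^ 2) := by ring
        _ ≤ (ℓ * M) ^ 4 * (8 * M ^ 3) := by gcongr
        _ = _ := by ring
    have hfl : (⌊R⌋₊ : ℝ) ≤ R := Nat.floor_le hR0
    refine polynomial_growth_of_growth (N := N) (u := #Y) (Q := ⌊R⌋₊) hn hnM hℓ hNpos.le
      (by positivity) (mod_cast (Fact.out : p.Prime).pos) hun hcube ?_ ?_
    · rw [mul_assoc, ← le_div_iff₀ (by positivity)]
      exact hfl
    · refine (card_pow_le_of_card_four_dilates_le hY2 hbound).imp (fun h ↦ mod_cast h)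
        fun h ↦ ⟨mod_cast h.1, ?_⟩
      have hYY : (#(Y + Y) : ℝ) ≤ M :=
        le_trans (mod_cast card_le_card (add_subset_add hYA hYA)) hadd
      calc (#Y : ℝ) ^ 3 ≤ 4 * #(Y + Y) * ⌊R⌋₊ := by exact_mod_cast h.2
        _ ≤ 4 * M * ⌊R⌋₊ := by gcongr
  · right; left
    have hY1 : (#Y : ℝ) ≤ 1 := by
      have : #Y ≤ 1 := by omega
      exact_mod_cast this
    have hYne : Y.Nonempty := by
      rw [nonempty_iff_ne_empty]
      intro h
      rw [h, card_empty, Nat.cast_zero, mul_zero] at hcube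
      have : (0 : ℝ) < (#A : ℝ) ^ 3 := by positivity
      linarith
    obtain ⟨y, hy⟩ := hYne
    have hNA : (N : ℝ) ≤ #A := by
      exact_mod_cast (mem_filter.1 hy).2.trans (card_le_card (filter_subset _ _))
    have hsq : (#A : ℝ) ^ 2 ≤ 4 * ℓ * M := by
      refine le_of_mul_le_mul_right ?_ (by linarith : (0 : ℝ) < #A)
      calc (#A : ℝ) ^ 2 * #A = (#A : ℝ) ^ 3 := by ring
        _ ≤ 4 * ℓ * M * N * #Y := hcube
        _ ≤ 4 * ℓ * M * #A * 1 := by gcongr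
        _ = _ := by ring
    have hℓ8 : ℓ ≤ ℓ ^ 8 := le_self_pow₀ hℓ (by norm_num)
    calc (#A : ℝ) ^ 12 = (#A : ℝ) ^ 2 * #A ^ 10 := by ring
      _ ≤ 4 * ℓ * M * M ^ 10 := by gcongr
      _ = 4 * ℓ * M ^ 11 := by ring
      _ ≤ 2 ^ 13 * ℓ ^ 8 * M ^ 11 := by gcongr; norm_num

lemma polynomial_growth_of_sqrt_le {A : Finset (ZMod p)} (hA : 2 ≤ #A) (hp : √p ≤ #A) {M : ℝ}
    (hadd : (#(A + A) : ℝ) ≤ M) (hmul : (#(A * A) : ℝ) ≤ M) :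
    p * (#A : ℝ) ^ 10 ≤ 2 ^ 27 * (3 * Real.log #A) ^ 8 * M ^ 11 ∨
      (#A : ℝ) ^ 14 ≤ 2 ^ 27 * (3 * Real.log #A) ^ 8 * M ^ 12 * √p := by
  have hcard : #A ≤ #(A.erase 0) + 1 := by
    have := pred_card_le_card_erase (s := A) (a := 0)
    omega
  have hBpos : 0 < #(A.erase 0) := by omega
  have hB1 : (1 : ℝ) ≤ #(A.erase 0) := mod_cast hBpos
  have hBA : A.erase 0 ⊆ A := erase_subset _ _
  have hB2 : (#A : ℝ) ≤ 2 * #(A.erase 0) := by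
    have : #A ≤ 2 * #(A.erase 0) := by omega
    exact_mod_cast this
  have hM0 : 0 ≤ M := le_trans (Nat.cast_nonneg _) hadd
  have hlogA : 1 / 2 ≤ Real.log #A := by
    have h1 : Real.log 2 ≤ Real.log #A := Real.log_le_log (by norm_num) (mod_cast hA)
    linarith [Real.log_two_gt_d9]
  have hlogB : Real.log #(A.erase 0) ≤ Real.log #A :=
    Real.log_le_log (by linarith) (mod_cast card_le_card hBA)
  have hlogB0 : 0 ≤ Real.log #(A.erase 0) := Real.log_natCast_nonneg _
  have hℓ : 1 + Real.log #(A.erase 0) ≤ 3 * Real.log #A := by linarith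
  have hpA : (p : ℝ) ≤ #A ^ 2 := (Real.sqrt_le_left (Nat.cast_nonneg _)).1 hp
  set L := (3 * Real.log #A) ^ 8 with hL
  have hpow : (1 + Real.log #(A.erase 0)) ^ 8 ≤ L := by
    rw [hL]; gcongr
  have hL0 : 0 ≤ L := by positivity
  have hLM : 0 ≤ L * M ^ 11 := by positivity
  rcases polynomial_growth (notMem_erase 0 A) (card_pos.1 hBpos) (M := M)
    (le_trans (mod_cast card_le_card (add_subset_add hBA hBA)) hadd)
    (le_trans (mod_cast card_le_card (mul_subset_mul hBA hBA)) hmul) with h | h | h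
  · left
    calc p * (#A : ℝ) ^ 10 ≤ (p : ℝ) * (2 * #(A.erase 0)) ^ 10 := by gcongr
      _ = 2 ^ 10 * ((p : ℝ) * #(A.erase 0) ^ 10) := by ring
      _ ≤ 2 ^ 10 * (2 ^ 13 * (1 + Real.log #(A.erase 0)) ^ 8 * M ^ 11) := by gcongr
      _ ≤ 2 ^ 10 * (2 ^ 13 * L * M ^ 11) := by gcongr
      _ ≤ 2 ^ 27 * L * M ^ 11 := by linarith
  · left
    calc p * (#A : ℝ) ^ 10 ≤ (#A : ℝ) ^ 2 * #A ^ 10 := by gcongr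
      _ = (#A : ℝ) ^ 12 := by ring
      _ ≤ (2 * (#(A.erase 0) : ℝ)) ^ 12 := by gcongr
      _ = 2 ^ 12 * (#(A.erase 0) : ℝ) ^ 12 := by ring
      _ ≤ 2 ^ 12 * (2 ^ 13 * (1 + Real.log #(A.erase 0)) ^ 8 * M ^ 11) := by gcongr
      _ ≤ 2 ^ 12 * (2 ^ 13 * L * M ^ 11) := by gcongr
      _ ≤ 2 ^ 27 * L * M ^ 11 := by linarith
  · right
    calc (#A : ℝ) ^ 14 ≤ (2 * (#(A.erase 0) : ℝ)) ^ 14 := by gcongr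
      _ = 2 ^ 14 * (#(A.erase 0) : ℝ) ^ 14 := by ring
      _ ≤ 2 ^ 14 * (2 ^ 13 * (1 + Real.log #(A.erase 0)) ^ 8 * M ^ 12 * √p) := by gcongr
      _ ≤ 2 ^ 14 * (2 ^ 13 * L * M ^ 12 * √p) := by gcongr
      _ = 2 ^ 27 * L * M ^ 12 * √p := by ring

end PrimeField

lemma le_mul_mul_of_pow_le {k : ℕ} (hk : 8 ≤ k) (hk' : k ≤ 12) {X C t M : ℝ} (hC : 1 ≤ C)
    (ht : 1 / 2 ≤ t) (hM : 0 ≤ M) (h : X ^ k ≤ C * t ^ 8 * M ^ k) : X ≤ 16 * C * t * M := by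
  refine le_of_pow_le_pow_left₀ (by omega : k ≠ 0) (by positivity) (h.trans ?_)
  have ht' : t ^ 8 ≤ 16 * t ^ k := by
    obtain ⟨j, rfl⟩ := Nat.exists_eq_add_of_le hk
    have hj : (1 : ℝ) ≤ 16 * t ^ j := by
      calc (1 : ℝ) = 16 * (1 / 2) ^ 4 := by norm_num
        _ ≤ 16 * (1 / 2) ^ j := by
          gcongr ?_ * ?_
          exact pow_le_pow_of_le_one (by norm_num) (by norm_num) (by omega)
        _ ≤ 16 * t ^ j := by gcongr
    calc t ^ 8 = t ^ 8 * 1 := by ring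
      _ ≤ t ^ 8 * (16 * t ^ j) := by gcongr
      _ = _ := by ring
  have hCk : 16 * C ≤ (16 * C) ^ k := le_self_pow₀ (by linarith) (by omega)
  calc C * t ^ 8 * M ^ k ≤ C * (16 * t ^ k) * M ^ k := by gcongr
    _ = 16 * C * (t ^ k * M ^ k) := by ring
    _ ≤ (16 * C) ^ k * (t ^ k * M ^ k) := by gcongr
    _ = _ := by rw [mul_pow, mul_pow]; ring

theorem sum_product_large :
    ∃ c α : ℝ, 0 < c ∧ 0 ≤ α ∧ ∀ (p : ℕ), p.Prime → ∀ A : Finset (ZMod p),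
      2 ≤ A.card → Real.sqrt p ≤ (A.card : ℝ) →
      c * (Real.log (A.card : ℝ)) ^ (-α) *
        min ((A.card : ℝ) ^ ((13 : ℝ) / 12) * ((A.card : ℝ) / Real.sqrt p) ^ ((1 : ℝ) / 12))
            ((A.card : ℝ) * ((p : ℝ) / (A.card : ℝ)) ^ ((1 : ℝ) / 11)) ≤
        max ((A + A).card : ℝ) ((A * A).card : ℝ) := by
  refine ⟨(16 * (2 ^ 27 * 3 ^ 8))⁻¹, 1, by norm_num, zero_le_one, fun p hp A hA hpA ↦ ?_⟩
  have : Fact p.Prime := ⟨hp⟩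
  set M : ℝ := max ((A + A).card : ℝ) ((A * A).card : ℝ) with hM
  have hM0 : 0 ≤ M := le_max_of_le_left (Nat.cast_nonneg _)
  have hmpos : (0 : ℝ) < #A := by
    have : 0 < #A := by omega
    exact_mod_cast this
  have hp0 : (0 : ℝ) < p := mod_cast hp.pos
  have hs : 0 < √(p : ℝ) := Real.sqrt_pos.2 hp0
  have ht : 1 / 2 ≤ Real.log #A := by
    have h1 : Real.log 2 ≤ Real.log #A := Real.log_le_log (by norm_num) (mod_cast hA)
    linarith [Real.log_two_gt_d9]
  have ht0 : 0 < Real.log #A := by linarith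
  rw [Real.rpow_neg_one, ← mul_inv, inv_mul_le_iff₀ (by positivity)]
  rcases polynomial_growth_of_sqrt_le hA hpA (M := M) (le_max_left _ _) (le_max_right _ _)
    with h | h
  · refine (min_le_right _ _).trans
      (le_mul_mul_of_pow_le (k := 11) (by norm_num) (by norm_num) (by norm_num) ht hM0 ?_)
    have e : (((p : ℝ) / #A) ^ ((1 : ℝ) / 11)) ^ 11 = p / #A := by
      rw [← Real.rpow_natCast, ← Real.rpow_mul (by positivity)]
      norm_num
    calc ((#A : ℝ) * ((p : ℝ) / #A) ^ ((1 : ℝ) / 11)) ^ 11 = p * #A ^ 10 := by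
          rw [mul_pow, e]; field_simp
      _ ≤ _ := h
      _ = _ := by ring
  · refine (min_le_left _ _).trans
      (le_mul_mul_of_pow_le (k := 12) (by norm_num) (by norm_num) (by norm_num) ht hM0 ?_)
    have e₁ : ((#A : ℝ) ^ ((13 : ℝ) / 12)) ^ 12 = #A ^ 13 := by
      rw [← Real.rpow_natCast, ← Real.rpow_mul hmpos.le, ← Real.rpow_natCast]
      norm_num
    have e₂ : (((#A : ℝ) / √p) ^ ((1 : ℝ) / 12)) ^ 12 = #A / √p := by
      rw [← Real.rpow_natCast, ← Real.rpow_mul (by positivity)]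
      norm_num
    rw [mul_pow, e₁, e₂, ← mul_div_assoc, ← pow_succ, div_le_iff₀ hs]
    exact h.trans_eq (by ring)
end

section
/- There exist absolute constants c > 0 and α ≥ 0 such that for every finite A ⊆ F_p with |A| ≥ p^{1/2}, at least one of the following holds: (i) |A+A|⁸|AA|⁴ ≥ c(log|A|)^{−α}|A|^{14}/p^{1/2}, or (ii) |A+A|⁷|AA|⁴ ≥ c(log|A|)^{−α}|A|^{10}·p. -/
open Finset Pointwise

section General

/-- Cauchy–Schwarz: a map with a small image has many collisions. -/
lemma card_sq_le_card_image_mul_collisions {α β : Type*} [DecidableEq β]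
    (s : Finset α) (f : α → β) :
    #s ^ 2 ≤ #(s.image f) * #{q ∈ s ×ˢ s | f q.1 = f q.2} := by
  classical
  have hcoll : #{q ∈ s ×ˢ s | f q.1 = f q.2} = ∑ b ∈ s.image f, #{a ∈ s | f a = b} ^ 2 := by
    rw [card_eq_sum_card_fiberwise (f := fun q => f q.1) (t := s.image f)]
    · refine sum_congr rfl fun b _ => ?_
      rw [sq, ← card_product]
      congr 1
      ext ⟨x, y⟩
      simp only [mem_filter, mem_product]
      grind
    · intro q hq
      simp only [coe_filter, mem_product, Set.mem_ofPred_eq] at hq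
      exact mem_coe.2 (mem_image_of_mem f hq.1.1)
  rw [hcoll, card_eq_sum_card_image f s]
  exact sq_sum_le_card_mul_sum_sq

/-- A property stable under disjoint unions that is inherited by some nonempty subset of every
large subset of `C` holds for a subset exhausting most of `C`. -/
lemma exists_subset_card_sdiff_lt {α : Type*} [DecidableEq α] (Q : Finset α → Prop) (C : Finset α)
    (k : ℝ) (h_empty : Q ∅) (h_union : ∀ S T, Disjoint S T → Q S → Q T → Q (S ∪ T))
    (h : ∀ S ⊆ C, k ≤ #S → ∃ T ⊆ S, T.Nonempty ∧ Q T) :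
    ∃ S ⊆ C, (#(C \ S) : ℝ) < k ∧ Q S := by
  classical
  obtain ⟨S, hS, hmax⟩ := exists_max_image (C.powerset.filter Q) card
    ⟨∅, by simp [h_empty]⟩
  simp only [mem_filter, mem_powerset] at hS hmax
  refine ⟨S, hS.1, ?_, hS.2⟩
  by_contra! hk
  obtain ⟨T, hT, hT0, hQT⟩ := h _ sdiff_subset hk
  have hdisj : Disjoint S T := disjoint_of_subset_right hT disjoint_sdiff
  have := hmax (S ∪ T) ⟨union_subset hS.1 (hT.trans sdiff_subset), h_union _ _ hdisj hS.2 hQT⟩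
  rw [card_union_of_disjoint hdisj] at this
  have := hT0.card_pos
  omega

end General

section Additive

variable {G : Type*} [AddCommGroup G] [DecidableEq G]

/-- One step of Petridis' argument: the effect on sumsets of inserting an element. -/
lemma exists_subset_card_add_insert_le (X C : Finset G) (x : G) :
    ∃ X' ⊆ X, #(X + insert x C) + #X' = #(X + C) + #X ∧
      ∀ B : Finset G, #(X + B + insert x C) + #(X' + B) ≤ #(X + B + C) + #(X + B) := by
  classical
  have hins (Y : Finset G) : Y + insert x C = (Y + C) ∪ (Y + {x}) := by
    rw [insert_eq, union_comm, add_union]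
  refine ⟨{a ∈ X | a + x ∈ X + C}, filter_subset _ _, ?_, fun B => ?_⟩
  · have h : #{a ∈ X | a + x ∈ X + C} = #((X + C) ∩ (X + {x})) := by
      rw [← card_add_singleton _ x]
      congr 1
      ext y
      simp only [mem_add (t := {x}), mem_singleton, exists_eq_left, mem_filter, mem_inter]
      grind
    rw [hins, h, card_union_add_card_inter, card_add_singleton]
  · have h : {a ∈ X | a + x ∈ X + C} + B + {x} ⊆ (X + B + C) ∩ (X + B + {x}) := by
      refine subset_inter ?_ (by gcongr; exact filter_subset _ _)
      intro y hy
      simp only [mem_add, mem_singleton, exists_eq_left, mem_filter] at hy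
      obtain ⟨_, ⟨a, ⟨-, u, hu, c, hc, h1⟩, b, hb, rfl⟩, rfl⟩ := hy
      have : a + b + x = u + b + c := by
        rw [add_right_comm, ← h1, add_right_comm]
      rw [this]
      exact add_mem_add (add_mem_add hu hb) hc
    have := card_le_card h
    rw [card_add_singleton] at this
    have h2 := card_union_add_card_inter (X + B + C) (X + B + {x})
    rw [card_add_singleton] at h2
    rw [hins]
    omega

/-- Petridis' lemma for two summands. -/
lemma exists_subset_card_add_add_mul_le {A B₁ B₂ : Finset G} (hA : A.Nonempty)
    (hB₁ : B₁.Nonempty) (hB₂ : B₂.Nonempty) :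
    ∃ X ⊆ A, X.Nonempty ∧ ∀ C : Finset G,
      (#(X + B₁ + C) : ℝ) * #A ≤ 2 * #(A + B₁) * #(X + C) ∧
      (#(X + B₂ + C) : ℝ) * #A ≤ 2 * #(A + B₂) * #(X + C) := by
  classical
  set w₁ : ℝ := ((#(A + B₂) : ℕ) : ℝ) with hw₁
  set w₂ : ℝ := ((#(A + B₁) : ℕ) : ℝ) with hw₂
  have hw₁0 : 0 < w₁ := by simpa [hw₁, card_pos] using ⟨hA, hB₂⟩
  have hw₂0 : 0 < w₂ := by simpa [hw₂, card_pos] using ⟨hA, hB₁⟩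
  let φ : Finset G → ℝ := fun X => w₁ * #(X + B₁) + w₂ * #(X + B₂)
  obtain ⟨X, hX, hmin⟩ := exists_min_image (A.powerset.filter (·.Nonempty)) (fun X => φ X / #X)
    ⟨A, by simp [hA]⟩
  simp only [mem_filter, mem_powerset] at hX hmin
  have hA0 : (0 : ℝ) < #A := by exact_mod_cast hA.card_pos
  have hX0 : (0 : ℝ) < #X := by exact_mod_cast hX.2.card_pos
  set l := φ X / #X with hl
  have hlX : φ X = l * #X := by rw [hl]; field_simp
  have hlA : l * #A ≤ 2 * w₁ * w₂ := by
    have := hmin A ⟨subset_rfl, hA⟩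
    rw [le_div_iff₀ hA0] at this
    refine this.trans_eq ?_
    simp only [φ, ← hw₁, ← hw₂]; ring
  have hsub : ∀ X' ⊆ X, l * #X' ≤ φ X' := by
    intro X' hX'
    rcases X'.eq_empty_or_nonempty with rfl | h0
    · simp [φ]
    · have := hmin X' ⟨hX'.trans hX.1, h0⟩
      rwa [le_div_iff₀ (by exact_mod_cast h0.card_pos)] at this
  have key (C : Finset G) : w₁ * #(X + B₁ + C) + w₂ * #(X + B₂ + C) ≤ l * #(X + C) := by
    induction C using Finset.induction_on with
    | empty => simp
    | insert x C _ ih =>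
      obtain ⟨X', hX', h1, h2⟩ := exists_subset_card_add_insert_le X C x
      have h1' : (#(X + insert x C) : ℝ) + #X' = #(X + C) + #X := by exact_mod_cast h1
      have h3 : (#(X + B₁ + insert x C) : ℝ) + #(X' + B₁) ≤ #(X + B₁ + C) + #(X + B₁) := by
        exact_mod_cast h2 B₁
      have h4 : (#(X + B₂ + insert x C) : ℝ) + #(X' + B₂) ≤ #(X + B₂ + C) + #(X + B₂) := by
        exact_mod_cast h2 B₂
      have h5 := hsub X' hX'
      have h6 := mul_le_mul_of_nonneg_left h3 hw₁0.le
      have h7 := mul_le_mul_of_nonneg_left h4 hw₂0.le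
      have h8 : l * (#(X + insert x C) : ℝ) = l * #(X + C) + l * #X - l * #X' := by
        rw [← mul_add, ← h1']; ring
      simp only [φ] at h5 hlX
      linarith
  refine ⟨X, hX.1, hX.2, fun C => ?_⟩
  have hC := mul_le_mul_of_nonneg_right (key C) hA0.le
  have hC' := mul_le_mul_of_nonneg_right hlA (Nat.cast_nonneg (α := ℝ) #(X + C))
  constructor
  · refine le_of_mul_le_mul_left ?_ hw₁0
    have : 0 ≤ w₂ * #(X + B₂ + C) * #A := mul_nonneg (mul_nonneg hw₂0.le (Nat.cast_nonneg _)) hA0.le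
    nlinarith
  · refine le_of_mul_le_mul_left ?_ hw₂0
    have : 0 ≤ w₁ * #(X + B₁ + C) * #A := mul_nonneg (mul_nonneg hw₁0.le (Nat.cast_nonneg _)) hA0.le
    nlinarith

/-- If every half of `A` has a nonempty part `T` with `|T + D| ≤ t |T|`, then so has `A` a part
of at least half its size. -/
lemma exists_half_card_add_le {A D : Finset G} (hA : A.Nonempty) (t : ℝ)
    (h : ∀ S ⊆ A, S.Nonempty → (#A : ℝ) / 2 ≤ #S →
      ∃ T ⊆ S, T.Nonempty ∧ (#(T + D) : ℝ) ≤ t * #T) :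
    ∃ S ⊆ A, (#A : ℝ) / 2 ≤ #S ∧ (#(S + D) : ℝ) ≤ t * #S := by
  have hA0 : (0 : ℝ) < #A := by exact_mod_cast hA.card_pos
  obtain ⟨S, hS, hlt, hQ⟩ := exists_subset_card_sdiff_lt
    (fun S : Finset G => (#(S + D) : ℝ) ≤ t * #S) A (#A / 2) (by simp)
    (fun S T hST hS hT => by
      have h1 : (#(S ∪ T + D) : ℝ) ≤ #(S + D) + #(T + D) := by
        rw [union_add]; exact_mod_cast card_union_le _ _
      rw [card_union_of_disjoint hST]
      push_cast
      linarith)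
    (fun S hS hk => h S hS (by
      rw [← card_pos]; have : (0 : ℝ) < #S := by linarith
      exact_mod_cast this) hk)
  refine ⟨S, hS, ?_, hQ⟩
  have : (#(A \ S) : ℝ) + #S = #A := by exact_mod_cast card_sdiff_add_card_eq_card hS
  linarith

/-- Plünnecke's inequality for two distinct summands, with a large subset. -/
lemma exists_half_card_add_add_le {A B₁ B₂ : Finset G} (hA : A.Nonempty)
    (hB₁ : B₁.Nonempty) (hB₂ : B₂.Nonempty) :
    ∃ S ⊆ A, (#A : ℝ) / 2 ≤ #S ∧
      (#(S + (B₁ + B₂)) : ℝ) ≤ 16 * (#(A + B₁) / #A) * (#(A + B₂) / #A) * #S := by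
  have hA0 : (0 : ℝ) < #A := by exact_mod_cast hA.card_pos
  refine exists_half_card_add_le hA _ fun S hSA hS0 hS => ?_
  obtain ⟨X, hX, hX0, hpet⟩ := exists_subset_card_add_add_mul_le hS0 hB₁ hB₂
  refine ⟨X, hX, hX0, ?_⟩
  have hstep {B : Finset G} {y z : ℝ} (hz : 0 ≤ z) (h : y * #S ≤ 2 * #(S + B) * z) :
      y ≤ 4 * (#(A + B) / #A) * z := by
    have h1 : (#(S + B) : ℝ) ≤ #(A + B) := by
      exact_mod_cast card_le_card (add_subset_add_right hSA)
    have hS0 : (0 : ℝ) < #S := by linarith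
    rw [← le_div_iff₀ hS0] at h
    refine h.trans ?_
    calc 2 * (#(S + B) : ℝ) * z / #S ≤ 2 * #(A + B) * z / (#A / 2) := by gcongr
      _ = _ := by field_simp; ring
  have h1 := hstep (by positivity) (hpet B₂).1
  have h2 := hstep (by positivity) (hpet {0}).2
  simp only [singleton_zero, add_zero] at h2
  rw [← add_assoc]
  calc _ ≤ _ := h1
    _ ≤ 4 * (#(A + B₁) / #A) * (4 * (#(A + B₂) / #A) * #X) := by gcongr
    _ = _ := by ring

/-- Plünnecke's inequality for a fourfold sumset, with a large subset. -/
lemma exists_half_card_fourfold_add_le {A : Finset G} (hA : A.Nonempty) :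
    ∃ S ⊆ A, (#A : ℝ) / 2 ≤ #S ∧ (#(S + S + (S + S)) : ℝ) ≤ 64 * #(A + A) ^ 3 / #A ^ 2 := by
  have hA0 : (0 : ℝ) < #A := by exact_mod_cast hA.card_pos
  obtain ⟨S, hSA, hS, hle⟩ := exists_half_card_add_le (D := A + A + A) hA
    ((4 * (#(A + A) / #A)) ^ 3) fun S hSA hS0 hS => by
      obtain ⟨X, hX, hX0, hpet⟩ := exists_subset_card_add_add_mul_le hS0 hA hA
      refine ⟨X, hX, hX0, ?_⟩
      have hstep (C : Finset G) : (#(X + A + C) : ℝ) ≤ 4 * (#(A + A) / #A) * #(X + C) := by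
        have h := (hpet C).1
        have h1 : (#(S + A) : ℝ) ≤ #(A + A) := by
          exact_mod_cast card_le_card (add_subset_add_right hSA)
        have hS0 : (0 : ℝ) < #S := by linarith
        rw [← le_div_iff₀ hS0] at h
        refine h.trans ?_
        calc 2 * (#(S + A) : ℝ) * #(X + C) / #S ≤ 2 * #(A + A) * #(X + C) / (#A / 2) := by gcongr
          _ = _ := by field_simp; ring
      have h1 := hstep (A + A)
      have h2 := hstep A
      have h3 := hstep {0}
      simp only [singleton_zero, add_zero] at h3
      rw [add_assoc X, ← add_assoc A A] at h1
      rw [add_assoc] at h2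
      calc _ ≤ _ := h1
        _ ≤ 4 * (#(A + A) / #A) * (4 * (#(A + A) / #A) * (4 * (#(A + A) / #A) * #X)) := by
          gcongr; exact h2.trans (by gcongr)
        _ = _ := by ring
  refine ⟨S, hSA, hS, ?_⟩
  have hsub : S + S + (S + S) ⊆ S + (A + A + A) := by
    rw [add_assoc, add_assoc A]; gcongr
  calc (#(S + S + (S + S)) : ℝ) ≤ #(S + (A + A + A)) := by exact_mod_cast card_le_card hsub
    _ ≤ _ := hle
    _ ≤ (4 * (#(A + A) / #A)) ^ 3 * #A := by gcongr
    _ = _ := by field_simp; ring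

/-- Some translate of `D` meets `C` in at least `|C||D|/|C+D|` elements. -/
lemma exists_card_mul_card_le_card_inter_vadd (C D : Finset G) :
    ∃ s : G, (#C : ℝ) * #D ≤ #(C + D) * #(C ∩ (s +ᵥ D)) := by
  rcases C.eq_empty_or_nonempty with rfl | hC
  · exact ⟨0, by simp⟩
  rcases D.eq_empty_or_nonempty with rfl | hD
  · exact ⟨0, by simp⟩
  obtain ⟨s, -, hs⟩ := exists_max_image (C - D) (fun s => #(C ∩ (s +ᵥ D))) (hC.sub hD)
  refine ⟨s, ?_⟩
  have hcs := card_sq_le_card_image_mul_collisions (C ×ˢ D) (fun x => x.1 + x.2)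
  rw [← add_def, card_product] at hcs
  have hcoll : #{q ∈ (C ×ˢ D) ×ˢ C ×ˢ D | q.1.1 + q.1.2 = q.2.1 + q.2.2} ≤
      #C * #D * #(C ∩ (s +ᵥ D)) := by
    rw [← card_product]
    refine card_le_mul_card_image_of_maps_to (f := fun q => (q.1.1, q.2.2)) ?_ _ ?_ |>.trans_eq
      (mul_comm _ _)
    · simp +contextual
    · rintro ⟨c, d⟩ hcd
      rw [mem_product] at hcd
      refine le_trans ?_ (hs (c - d) (sub_mem_sub hcd.1 hcd.2))
      refine card_le_card_of_injOn (fun q => q.2.1) ?_ ?_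
      · rintro ⟨⟨c₁, d₁⟩, c₂, d₂⟩ hq
        simp only [coe_filter, mem_filter, mem_product, Set.mem_ofPred_eq, Prod.mk.injEq] at hq
        simp only [coe_inter, Set.mem_inter_iff, mem_coe, mem_vadd_finset, vadd_eq_add]
        refine ⟨hq.1.1.2.1, d₁, hq.1.1.1.2, ?_⟩
        obtain ⟨⟨-, h⟩, rfl, rfl⟩ := hq
        rw [sub_add_eq_add_sub, h, add_sub_cancel_right]
      · rintro ⟨⟨c₁, d₁⟩, c₂, d₂⟩ hq ⟨⟨c₁', d₁'⟩, c₂', d₂'⟩ hq' h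
        simp only [coe_filter, mem_filter, mem_product, Set.mem_ofPred_eq, Prod.mk.injEq]
          at hq hq' h
        grind
  have hpos : 0 < #C * #D := Nat.mul_pos hC.card_pos hD.card_pos
  have : #C * #D ≤ #(C + D) * #(C ∩ (s +ᵥ D)) := by
    refine Nat.le_of_mul_le_mul_left ?_ hpos
    calc _ = (#C * #D) ^ 2 := by ring
      _ ≤ _ := hcs
      _ ≤ #(C + D) * (#C * #D * #(C ∩ (s +ᵥ D))) := by gcongr
      _ = _ := by ring
  exact_mod_cast this

/-- Some translate of `D` meets `C` in at least `|C||D|/|C-D|` elements. -/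
lemma exists_card_mul_card_le_card_sub_mul_card_inter_vadd (C D : Finset G) :
    ∃ s : G, (#C : ℝ) * #D ≤ #(C - D) * #(C ∩ (s +ᵥ D)) := by
  rcases C.eq_empty_or_nonempty with rfl | hC
  · exact ⟨0, by simp⟩
  rcases D.eq_empty_or_nonempty with rfl | hD
  · exact ⟨0, by simp⟩
  obtain ⟨s, -, hs⟩ := exists_max_image (C - D) (fun s => #(C ∩ (s +ᵥ D))) (hC.sub hD)
  refine ⟨s, ?_⟩
  have : #(C ×ˢ D) ≤ #(C ∩ (s +ᵥ D)) * #(C - D) := by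
    refine card_le_mul_card_image_of_maps_to (f := fun q => q.1 - q.2)
      (fun q hq => ?_) _ fun t ht => le_trans ?_ (hs t ht)
    · rw [mem_product] at hq
      exact sub_mem_sub hq.1 hq.2
    · refine card_le_card_of_injOn (fun q => q.1) ?_ ?_
      · rintro ⟨c, d⟩ hq
        simp only [coe_filter, mem_product, Set.mem_ofPred_eq] at hq
        simp only [coe_inter, Set.mem_inter_iff, mem_coe, mem_vadd_finset, vadd_eq_add]
        exact ⟨hq.1.1, d, hq.1.2, by rw [← hq.2, sub_add_cancel]⟩
      · rintro ⟨c, d⟩ hq ⟨c', d'⟩ hq' h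
        simp only [coe_filter, mem_product, Set.mem_ofPred_eq] at hq hq' h
        grind
  rw [card_product, mul_comm #(C ∩ _)] at this
  exact_mod_cast this

/-- If each subset of `C` is well correlated with some translate of `D`, then three quarters of `C`
are covered by few translates of `D`. -/
lemma exists_subset_add_of_card_mul_card_le {C D : Finset G} (hD : D.Nonempty) {K : ℝ} (hK : 0 < K)
    (h : ∀ S ⊆ C, ∃ s : G, (#S : ℝ) * #D ≤ K * #(S ∩ (s +ᵥ D))) :
    ∃ S ⊆ C, (#(C \ S) : ℝ) ≤ #C / 4 ∧
      ∃ T : Finset G, S ⊆ T + D ∧ (#T : ℝ) ≤ 4 * K / #D := by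
  rcases C.eq_empty_or_nonempty with rfl | hC
  · exact ⟨∅, by simp, by simp, ∅, by simp, by simp; positivity⟩
  have hC0 : (0 : ℝ) < #C := by exact_mod_cast hC.card_pos
  have hD0 : (0 : ℝ) < #D := by exact_mod_cast hD.card_pos
  set m : ℝ := #C * #D / (4 * K) with hm
  have hm0 : 0 < m := by positivity
  obtain ⟨S, hS, hlt, T, hST, hT⟩ := exists_subset_card_sdiff_lt
    (fun S : Finset G => ∃ T : Finset G, S ⊆ T + D ∧ m * #T ≤ #S) C (#C / 4)
    ⟨∅, by simp, by simp⟩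
    (fun S S' hSS' ⟨T, h1, h2⟩ ⟨T', h3, h4⟩ => by
      refine ⟨T ∪ T', ?_, ?_⟩
      · rw [union_add]; exact union_subset_union h1 h3
      · rw [card_union_of_disjoint hSS']
        have : (#(T ∪ T') : ℝ) ≤ #T + #T' := by exact_mod_cast card_union_le _ _
        push_cast
        nlinarith)
    (fun S hS hk => by
      obtain ⟨s, hs⟩ := h S hS
      have hle : m ≤ #(S ∩ (s +ᵥ D)) := by
        rw [hm, div_le_iff₀ (by positivity)]
        have h1 : (#C / 4 : ℝ) * #D ≤ #S * #D := by gcongr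
        linarith
      refine ⟨S ∩ (s +ᵥ D), inter_subset_left, ?_, {s}, ?_, ?_⟩
      · rw [← card_pos]
        have := hm0.trans_le hle
        exact_mod_cast this
      · rw [singleton_add]; exact inter_subset_right
      · simpa using hle)
  refine ⟨S, hS, hlt.le, T, hST, ?_⟩
  have hSC : (#S : ℝ) ≤ #C := by exact_mod_cast card_le_card hS
  have h1 : m * #T ≤ #C := hT.trans hSC
  rw [mul_comm, ← le_div_iff₀ hm0] at h1
  refine h1.trans_eq ?_
  rw [hm]; field_simp

end Additive

section Levels

/-- A version of dyadic pigeonholing. -/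
lemma exists_level_sum_le {α : Type*} (s : Finset α) (f : α → ℕ) {n : ℕ} (hn : 0 < n)
    (hf : ∀ a ∈ s, f a ≤ n) :
    ∃ N, 1 ≤ N ∧ N ≤ n ∧ (∑ a ∈ s, f a : ℝ) ≤ N * #{a ∈ s | N ≤ f a} * harmonic n := by
  by_contra! h
  have hH : (0 : ℝ) < harmonic n := by exact_mod_cast harmonic_pos hn.ne'
  have hsum : (∑ a ∈ s, f a : ℝ) = ∑ i ∈ range n, (#{a ∈ s | i + 1 ≤ f a} : ℝ) := by
    simp_rw [card_filter]
    push_cast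
    rw [sum_comm]
    refine sum_congr rfl fun a ha => ?_
    have hrange : {i ∈ range n | i + 1 ≤ f a} = range (f a) := by
      ext i
      have := hf a ha
      simp only [mem_range, mem_filter]
      omega
    rw [← sum_filter, sum_const, nsmul_one, hrange, card_range]
  set S := (∑ a ∈ s, f a : ℝ) with hS
  have hlt : ∑ i ∈ range n, (#{a ∈ s | i + 1 ≤ f a} : ℝ) <
      ∑ i ∈ range n, S / harmonic n * ((i + 1 : ℕ) : ℝ)⁻¹ := by
    refine sum_lt_sum_of_nonempty (nonempty_range_iff.2 hn.ne') fun i hi => ?_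
    have := h (i + 1) (by omega) (by rw [mem_range] at hi; omega)
    rw [← div_eq_mul_inv, div_div, lt_div_iff₀ (by positivity)]
    linarith
  rw [← mul_sum] at hlt
  have : (harmonic n : ℝ) = ∑ i ∈ range n, ((i + 1 : ℕ) : ℝ)⁻¹ := by
    simp [harmonic]
  rw [← this, div_mul_cancel₀ _ hH.ne'] at hlt
  linarith

end Levels

section Field

variable {F : Type*} [Field F] [DecidableEq F]

/-- A small product set forces one dilate of `B` to meet the other dilates in many points. -/
lemma exists_card_pow_three_le (B : Finset F) (hB : B.Nonempty) (h0 : 0 ∉ B) :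
    ∃ b ∈ B, #B ^ 3 ≤ #(B * B) * ∑ a ∈ B, #(a • B ∩ b • B) := by
  obtain ⟨b, hb, hmax⟩ := exists_max_image B (fun b => ∑ a ∈ B, #(a • B ∩ b • B)) hB
  refine ⟨b, hb, ?_⟩
  have hcs := card_sq_le_card_image_mul_collisions (B ×ˢ B) (fun x => x.1 * x.2)
  rw [← mul_def, card_product] at hcs
  have hcoll : #{q ∈ (B ×ˢ B) ×ˢ B ×ˢ B | q.1.1 * q.1.2 = q.2.1 * q.2.2} ≤
      ∑ c ∈ B, ∑ a ∈ B, #(a • B ∩ c • B) := by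
    rw [← sum_product', card_eq_sum_card_fiberwise (f := fun q => (q.2.1, q.1.1)) (t := B ×ˢ B)]
    · refine sum_le_sum ?_
      rintro ⟨c, a⟩ hca
      rw [mem_product] at hca
      refine card_le_card_of_injOn (fun q => a * q.1.2) ?_ ?_
      · rintro ⟨⟨a', x⟩, c', y⟩ hq
        simp only [coe_filter, mem_filter, mem_product, Set.mem_ofPred_eq, Prod.mk.injEq] at hq
        obtain ⟨⟨hq, h⟩, rfl, rfl⟩ := hq
        simp only [coe_inter, Set.mem_inter_iff, mem_coe, mem_smul_finset, smul_eq_mul]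
        exact ⟨⟨x, hq.1.2, rfl⟩, y, hq.2.2, h.symm⟩
      · rintro ⟨⟨a₁, x₁⟩, c₁, y₁⟩ hq ⟨⟨a₂, x₂⟩, c₂, y₂⟩ hq' h
        simp only [coe_filter, mem_filter, mem_product, Set.mem_ofPred_eq, Prod.mk.injEq]
          at hq hq' h
        obtain ⟨⟨-, h1⟩, rfl, rfl⟩ := hq
        obtain ⟨⟨-, h2⟩, rfl, rfl⟩ := hq'
        have ha : a₂ ≠ 0 := fun h => h0 (h ▸ hca.2)
        have hc : c₂ ≠ 0 := fun h => h0 (h ▸ hca.1)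
        have hx := mul_left_cancel₀ ha h
        subst hx
        have hy := mul_left_cancel₀ hc (h1.symm.trans h2)
        rw [hy]
    · intro q hq
      simp only [coe_filter, mem_product, Set.mem_ofPred_eq] at hq
      simp [hq]
  have hsum := sum_le_card_nsmul B _ _ hmax
  rw [smul_eq_mul] at hsum
  refine Nat.le_of_mul_le_mul_left ?_ hB.card_pos
  calc _ = (#B * #B) ^ 2 := by ring
    _ ≤ _ := hcs
    _ ≤ #(B * B) * (#B * ∑ a ∈ B, #(a • B ∩ b • B)) :=
      Nat.mul_le_mul_left _ (hcoll.trans hsum)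
    _ = _ := by ring

/-- Pulling back a covering of most of a dilate `u • A₁`. -/
lemma exists_smul_subset_add {A₁ D : Finset F} {u : F} (hu : u ≠ 0) {K : ℝ}
    (h : ∃ S ⊆ u • A₁, (#((u • A₁) \ S) : ℝ) ≤ #(u • A₁) / 4 ∧
      ∃ T : Finset F, S ⊆ T + D ∧ (#T : ℝ) ≤ K) :
    ∃ S ⊆ A₁, (#(A₁ \ S) : ℝ) ≤ #A₁ / 4 ∧
      ∃ T : Finset F, u • S ⊆ T + D ∧ (#T : ℝ) ≤ K := by
  obtain ⟨S, hS, hc, T, hST, hT⟩ := h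
  refine ⟨u⁻¹ • S, ?_, ?_, T, ?_, hT⟩
  · rw [← smul_finset_subset_smul_finset_iff₀ hu, smul_inv_smul₀ hu]
    exact hS
  · rw [← card_smul_finset₀ hu A₁, ← card_smul_finset₀ hu (A₁ \ _), smul_finset_sdiff₀ hu,
      smul_inv_smul₀ hu]
    exact hc
  · rwa [smul_inv_smul₀ hu]

/-- If `a • A` and `b • A` have a large intersection, then most of `± a • A₁`, for `A₁ ⊆ A`, is
covered by few translates of `b • A`. -/
lemma exists_subset_smul_subset_add {A A₁ : Finset F} (hA₁ : A₁ ⊆ A) {a b : F} (ha : a ≠ 0)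
    {N : ℕ} (hN : 1 ≤ N) (h : N ≤ #(a • A ∩ b • A)) {u : F} (hu : u = a ∨ u = -a) :
    ∃ S ⊆ A₁, (#(A₁ \ S) : ℝ) ≤ #A₁ / 4 ∧
      ∃ T : Finset F, u • S ⊆ T + b • A ∧ (#T : ℝ) ≤ 4 * #(A + A) / N := by
  set D := a • A ∩ b • A with hD
  have hDne : D.Nonempty := card_pos.1 (by omega)
  have hAne : A.Nonempty := by
    rw [nonempty_iff_ne_empty]
    rintro rfl
    simp [hD] at hDne
  have hK : (0 : ℝ) < #(A + A) := by exact_mod_cast (hAne.add hAne).card_pos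
  have hu0 : u ≠ 0 := by rcases hu with rfl | rfl <;> simpa using ha
  have hcover := exists_subset_add_of_card_mul_card_le (C := u • A₁) hDne hK fun S hS => by
    rcases hu with rfl | rfl
    · obtain ⟨s, hs⟩ := exists_card_mul_card_le_card_inter_vadd S D
      refine ⟨s, hs.trans ?_⟩
      have : #(S + D) ≤ #(A + A) := by
        rw [← card_smul_finset₀ ha (A + A), smul_add]
        exact card_le_card (add_subset_add
          (hS.trans (smul_finset_subset_smul_finset hA₁)) inter_subset_left)
      gcongr
    · obtain ⟨s, hs⟩ := exists_card_mul_card_le_card_sub_mul_card_inter_vadd S D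
      refine ⟨s, hs.trans ?_⟩
      have : #(S - D) ≤ #(A + A) := by
        rw [← card_smul_finset₀ hu0 (A + A), smul_add, sub_eq_add_neg]
        refine card_le_card (add_subset_add (hS.trans (smul_finset_subset_smul_finset hA₁)) ?_)
        rw [neg_smul_finset]
        exact neg_subset_neg inter_subset_left
      gcongr
  obtain ⟨S, hS, hc, T, hST, hT⟩ := exists_smul_subset_add hu0 hcover
  refine ⟨S, hS, hc, T, hST.trans (add_subset_add_left inter_subset_right), hT.trans ?_⟩
  gcongr

lemma half_card_le_card_inter {α : Type*} [DecidableEq α] {A S T : Finset α} (hS : S ⊆ A)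
    (hSc : (#(A \ S) : ℝ) ≤ #A / 4) (hTc : (#(A \ T) : ℝ) ≤ #A / 4) :
    (#A : ℝ) / 2 ≤ #(S ∩ T) := by
  have h1 : (#(A \ (S ∩ T)) : ℝ) ≤ #(A \ S) + #(A \ T) := by
    rw [sdiff_inter_distrib_right]
    exact_mod_cast card_union_le _ _
  have h2 : (#(A \ (S ∩ T)) : ℝ) + #(S ∩ T) = #A := by
    exact_mod_cast card_sdiff_add_card_eq_card (inter_subset_left.trans hS)
  linarith

/-- Upper bound for the sum of two dilates by differences of popular elements. -/
lemma exists_card_sub_smul_add_sub_smul_le {A A₁ : Finset F} (hA₁ : A₁ ⊆ A) (h0 : 0 ∉ A)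
    {e : F} {N : ℕ} (hN : 1 ≤ N) (h : ∀ a ∈ A₁, N ≤ #(a • A ∩ e • A)) {a b c d : F}
    (ha : a ∈ A₁) (hb : b ∈ A₁) (hc : c ∈ A₁) (hd : d ∈ A₁) :
    ∃ X ⊆ A₁, ∃ Y ⊆ A₁, (#A₁ : ℝ) / 2 ≤ #X ∧ (#A₁ : ℝ) / 2 ≤ #Y ∧
      (#((c - d) • X + (a - b) • Y) : ℝ) ≤
        (4 * #(A + A) / N) ^ 4 * #(A + A + (A + A)) := by
  have hne {a : F} (ha : a ∈ A₁) : a ≠ 0 := fun h => h0 (h ▸ hA₁ ha)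
  obtain ⟨Sa, hSa, hSac, Ta, hTa, hTac⟩ :=
    exists_subset_smul_subset_add hA₁ (hne ha) hN (h a ha) (u := a) (.inl rfl)
  obtain ⟨Sb, hSb, hSbc, Tb, hTb, hTbc⟩ :=
    exists_subset_smul_subset_add hA₁ (hne hb) hN (h b hb) (u := -b) (.inr rfl)
  obtain ⟨Sc, hSc, hScc, Tc, hTc, hTcc⟩ :=
    exists_subset_smul_subset_add hA₁ (hne hc) hN (h c hc) (u := c) (.inl rfl)
  obtain ⟨Sd, hSd, hSdc, Td, hTd, hTdc⟩ :=
    exists_subset_smul_subset_add hA₁ (hne hd) hN (h d hd) (u := -d) (.inr rfl)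
  refine ⟨Sc ∩ Sd, inter_subset_left.trans hSc, Sa ∩ Sb, inter_subset_left.trans hSa,
    half_card_le_card_inter hSc hScc hSdc, half_card_le_card_inter hSa hSac hSbc, ?_⟩
  have hsub {u v : F} {S S' T T' : Finset F} (hS : u • S ⊆ T + e • A)
      (hS' : -v • S' ⊆ T' + e • A) :
      (u - v) • (S ∩ S') ⊆ (T + T') + e • (A + A) := by
    rw [smul_add, add_add_add_comm]
    intro y hy
    obtain ⟨x, hx, rfl⟩ := mem_smul_finset.1 hy
    rw [mem_inter] at hx
    rw [sub_smul, sub_eq_add_neg, ← neg_smul]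
    exact add_mem_add (hS (smul_mem_smul_finset hx.1)) (hS' (smul_mem_smul_finset hx.2))
  have hle := card_le_card (add_subset_add (hsub hTc hTd) (hsub hTa hTb))
  rw [add_add_add_comm, ← smul_add] at hle
  have h2 : #((c - d) • (Sc ∩ Sd) + (a - b) • (Sa ∩ Sb)) ≤
      (#Tc * #Td * (#Ta * #Tb)) * #(A + A + (A + A)) := by
    refine hle.trans (card_add_le.trans (Nat.mul_le_mul ?_ card_smul_finset_le))
    exact card_add_le.trans (Nat.mul_le_mul card_add_le card_add_le)
  calc (#((c - d) • (Sc ∩ Sd) + (a - b) • (Sa ∩ Sb)) : ℝ) ≤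
      (#Tc * #Td * (#Ta * #Tb)) * #(A + A + (A + A)) := by exact_mod_cast h2
    _ ≤ ((4 * #(A + A) / N) * (4 * #(A + A) / N) * ((4 * #(A + A) / N) * (4 * #(A + A) / N))) *
        #(A + A + (A + A)) := by gcongr
    _ = _ := by ring

/-- A dilation with few collisions on `A × A` produces large sums on large subsets. -/
lemma card_sq_mul_card_sq_le {A X Y : Finset F} (hX : X ⊆ A) (hY : Y ⊆ A) (ξ : F) :
    (#X * #Y) ^ 2 ≤ #(X + ξ • Y) *
      #{q ∈ (A ×ˢ A) ×ˢ A ×ˢ A | q.1.1 + ξ * q.1.2 = q.2.1 + ξ * q.2.2} := by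
  have hcs := card_sq_le_card_image_mul_collisions (X ×ˢ Y) (fun x => x.1 + ξ * x.2)
  rw [card_product] at hcs
  refine hcs.trans (Nat.mul_le_mul (card_le_card ?_) (card_le_card ?_))
  · intro z hz
    simp only [mem_image, mem_product] at hz
    obtain ⟨q, hq, rfl⟩ := hz
    exact add_mem_add hq.1 (smul_mem_smul_finset (a := ξ) hq.2)
  · have hXY := product_subset_product hX hY
    exact filter_subset_filter _ (product_subset_product hXY hXY)

/-- Some dilation has no more collisions on `A × A` than expected. -/
lemma exists_card_collisions_le [Fintype F] (A : Finset F) :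
    ∃ ξ : F, Fintype.card F *
      #{q ∈ (A ×ˢ A) ×ˢ A ×ˢ A | q.1.1 + ξ * q.1.2 = q.2.1 + ξ * q.2.2} ≤
        Fintype.card F * #A ^ 2 + #A ^ 4 := by
  set J : F → ℕ := fun ξ =>
    #{q ∈ (A ×ˢ A) ×ˢ A ×ˢ A | q.1.1 + ξ * q.1.2 = q.2.1 + ξ * q.2.2} with hJ
  obtain ⟨ξ, -, hmin⟩ := exists_min_image univ J ⟨0, mem_univ _⟩
  refine ⟨ξ, ?_⟩
  have h1 := card_nsmul_le_sum univ J (J ξ) hmin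
  rw [smul_eq_mul, card_univ] at h1
  refine h1.trans ?_
  have hterm (q : (F × F) × F × F) :
      #{ξ : F | q.1.1 + ξ * q.1.2 = q.2.1 + ξ * q.2.2} ≤
        (if q.1 = q.2 then Fintype.card F else 0) + 1 := by
    split_ifs with hq
    · exact (card_le_univ _).trans (Nat.le_succ _)
    · rw [zero_add, card_le_one]
      intro s hs t ht
      simp only [mem_filter, mem_univ, true_and] at hs ht
      obtain ⟨⟨x, y⟩, x', y'⟩ := q
      simp only [Prod.mk.injEq, not_and] at hs ht hq
      by_contra hst
      have h2 : (s - t) * (y - y') = 0 := by linear_combination hs - ht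
      rcases mul_eq_zero.1 h2 with h3 | h3
      · exact hst (sub_eq_zero.1 h3)
      · have hy := sub_eq_zero.1 h3
        subst hy
        exact hq (by simpa using hs) rfl
  calc ∑ ξ, J ξ = ∑ q ∈ (A ×ˢ A) ×ˢ A ×ˢ A, #{ξ : F | q.1.1 + ξ * q.1.2 = q.2.1 + ξ * q.2.2} := by
        simp_rw [hJ, card_filter]
        exact sum_comm
    _ ≤ ∑ q ∈ (A ×ˢ A) ×ˢ A ×ˢ A, ((if q.1 = q.2 then Fintype.card F else 0) + 1) :=
        sum_le_sum fun q _ => hterm q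
    _ = Fintype.card F * #A ^ 2 + #A ^ 4 := by
        rw [sum_add_distrib, sum_product]
        simp only [sum_ite_eq, sum_const, card_product, smul_eq_mul, mul_one]
        rw [sum_ite_mem, inter_self, sum_const, card_product, smul_eq_mul]
        ring

end Field

section Prime

variable {p : ℕ} [Fact p.Prime]

/-- Either every element is a quotient of differences of `A`, or some quotient of differences has a
successor that is not one. -/
lemma forall_quotient_or_exists_succ_not {A : Finset (ZMod p)} (hA : 1 < #A) :
    (∀ ξ : ZMod p, ∃ a ∈ A, ∃ b ∈ A, ∃ c ∈ A, ∃ d ∈ A, c ≠ d ∧ (c - d) * ξ = a - b) ∨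
    ∃ ξ : ZMod p, (∃ a ∈ A, ∃ b ∈ A, ∃ c ∈ A, ∃ d ∈ A, c ≠ d ∧ (c - d) * ξ = a - b) ∧
      ¬ ∃ a ∈ A, ∃ b ∈ A, ∃ c ∈ A, ∃ d ∈ A, c ≠ d ∧ (c - d) * (ξ + 1) = a - b := by
  rw [or_iff_not_imp_right]
  intro h
  push Not at h
  obtain ⟨c, hc, d, hd, hcd⟩ := one_lt_card.1 hA
  intro ξ
  rw [← ZMod.natCast_zmod_val ξ]
  induction ξ.val with
  | zero => exact ⟨c, hc, c, hc, c, hc, d, hd, hcd, by simp⟩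
  | succ n ih => simpa using h n ih

/-- The basic alternative for a set `A₁` of popular dilations. -/
lemma le_or_card_pow_three_le {A A₁ : Finset (ZMod p)} (hA₁ : A₁ ⊆ A) (hne : A₁.Nonempty)
    (h0 : 0 ∉ A) {e : ZMod p} {N : ℕ} (hN : 1 ≤ N) (hNA : N ≤ #A)
    (h : ∀ a ∈ A₁, N ≤ #(a • A ∩ e • A)) {Q : ℝ}
    (hQ : Q = (4 * #(A + A) / N) ^ 4 * #(A + A + (A + A))) :
    (p : ℝ) ≤ 32 * Q ∨ ((#A₁ : ℝ) ^ 2 ≤ p ∧ (#A₁ : ℝ) ^ 3 ≤ 256 * #(A + A) * Q) := by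
  have hAne : A.Nonempty := hne.mono hA₁
  have hAA : A.Nonempty → #A ≤ #(A + A) := fun h => card_le_card_add_right h
  have hA₁0 : (1 : ℝ) ≤ #A₁ := by exact_mod_cast hne.card_pos
  have hS1 : (#A₁ : ℝ) ≤ #(A + A) := by
    exact_mod_cast (card_le_card hA₁).trans (hAA hAne)
  have hN0 : (0 : ℝ) < N := by exact_mod_cast hN
  have hQ1 : 1 ≤ Q := by
    rw [hQ]
    have h1 : (1 : ℝ) ≤ 4 * #(A + A) / N := by
      rw [le_div_iff₀ hN0]
      have : (N : ℝ) ≤ #(A + A) := by exact_mod_cast hNA.trans (hAA hAne)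
      linarith
    have h2 : (1 : ℝ) ≤ #(A + A + (A + A)) := by
      exact_mod_cast ((hAne.add hAne).add (hAne.add hAne)).card_pos
    exact one_le_mul_of_one_le_of_one_le (one_le_pow₀ h1) h2
  have hp : (1 : ℝ) ≤ p := by exact_mod_cast (Fact.out : p.Prime).one_lt.le
  obtain hcard | hcard := (Nat.succ_le_of_lt hne.card_pos).eq_or_lt
  · right
    have : (#A₁ : ℝ) = 1 := by exact_mod_cast hcard.symm
    rw [this] at hS1 ⊢
    constructor
    · linarith
    · nlinarith
  rcases forall_quotient_or_exists_succ_not hcard with hall | ⟨ξ, hξ, hsucc⟩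
  · obtain ⟨ξ, hJ⟩ := exists_card_collisions_le A₁
    obtain ⟨a, ha, b, hb, c, hc, d, hd, hcd, hξ⟩ := hall ξ
    obtain ⟨X, hX, Y, hY, hXc, hYc, hle⟩ :=
      exists_card_sub_smul_add_sub_smul_le hA₁ h0 hN h ha hb hc hd
    rw [← hQ, ← hξ, mul_smul, ← smul_add, card_smul_finset₀ (sub_ne_zero.2 hcd)] at hle
    have hcs := card_sq_mul_card_sq_le hX hY ξ
    set J := #{q ∈ (A₁ ×ˢ A₁) ×ˢ A₁ ×ˢ A₁ | q.1.1 + ξ * q.1.2 = q.2.1 + ξ * q.2.2}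
    rw [ZMod.card] at hJ
    have hcs' : ((#X : ℝ) * #Y) ^ 2 ≤ #(X + ξ • Y) * J := by exact_mod_cast hcs
    have hJ' : (p : ℝ) * J ≤ p * #A₁ ^ 2 + #A₁ ^ 4 := by exact_mod_cast hJ
    have hmain : (#A₁ : ℝ) ^ 2 * p ≤ 16 * Q * (p + #A₁ ^ 2) := by
      have h1 : ((#A₁ : ℝ) / 2 * (#A₁ / 2)) ^ 2 ≤ Q * J := by
        calc _ ≤ ((#X : ℝ) * #Y) ^ 2 := by gcongr
          _ ≤ _ := hcs'
          _ ≤ Q * J := by gcongr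
      have h2 : (#A₁ : ℝ) ^ 2 * (#A₁ ^ 2 * p) ≤ #A₁ ^ 2 * (16 * Q * (p + #A₁ ^ 2)) := by
        calc (#A₁ : ℝ) ^ 2 * (#A₁ ^ 2 * p) = 16 * p * (#A₁ / 2 * (#A₁ / 2)) ^ 2 := by ring
          _ ≤ 16 * p * (Q * J) := by gcongr
          _ = 16 * Q * (p * J) := by ring
          _ ≤ 16 * Q * (p * #A₁ ^ 2 + #A₁ ^ 4) := by gcongr
          _ = _ := by ring
      exact le_of_mul_le_mul_left h2 (by positivity)
    rcases le_total (p : ℝ) (#A₁ ^ 2) with hlarge | hsmall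
    · left
      refine le_of_mul_le_mul_left (a := (#A₁ : ℝ) ^ 2) ?_ (by positivity)
      nlinarith
    · right
      refine ⟨hsmall, ?_⟩
      have h3 : (#A₁ : ℝ) ^ 2 ≤ 32 * Q := by
        refine le_of_mul_le_mul_left (a := (p : ℝ)) ?_ (by positivity)
        nlinarith
      calc (#A₁ : ℝ) ^ 3 = #A₁ * #A₁ ^ 2 := by ring
        _ ≤ #(A + A) * (32 * Q) := by gcongr
        _ ≤ 256 * #(A + A) * Q := by
          have : 0 ≤ (#(A + A) : ℝ) * Q := by positivity
          linarith
  · right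
    obtain ⟨a, ha, b, hb, c, hc, d, hd, hcd, hξ⟩ := hξ
    have hinj : Set.InjOn (fun x : ZMod p × ZMod p => x.1 + (ξ + 1) * x.2) (A₁ ×ˢ A₁ : Finset _) := by
      rintro ⟨x, y⟩ hx ⟨x', y'⟩ hx' hxx'
      simp only [coe_product, Set.mem_prod, mem_coe] at hx hx' hxx'
      by_cases hy : y = y'
      · subst hy
        simpa using hxx'
      · exact absurd ⟨x', hx'.1, x, hx.1, y, hx.2, y', hx'.2, hy, by linear_combination hxx'⟩ hsucc
    have hcardp : (#A₁ : ℝ) ^ 2 ≤ p := by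
      have := card_le_univ ((A₁ ×ˢ A₁).image fun x => x.1 + (ξ + 1) * x.2)
      rw [card_image_of_injOn hinj, card_product, ZMod.card, ← sq] at this
      exact_mod_cast this
    refine ⟨hcardp, ?_⟩
    obtain ⟨X, hX, Y, hY, hXc, hYc, hle⟩ :=
      exists_card_sub_smul_add_sub_smul_le hA₁ h0 hN h ha hb hc hd
    rw [← hQ, ← hξ, mul_smul, ← smul_add, card_smul_finset₀ (sub_ne_zero.2 hcd)] at hle
    have hX0 : (0 : ℝ) < #X := by linarith
    have hY0 : (0 : ℝ) < #Y := by linarith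
    have hXne : X.Nonempty := card_pos.1 (by exact_mod_cast hX0)
    have hYne : Y.Nonempty := card_pos.1 (by exact_mod_cast hY0)
    obtain ⟨Z, hZX, hZc, hZ⟩ := exists_half_card_add_add_le hXne hYne (hYne.smul_finset (a := ξ))
    have hZ0 : (0 : ℝ) < #Z := by linarith
    have hZY : (#Z : ℝ) * #Y ≤ #(Z + (Y + ξ • Y)) := by
      have h1 : #(Z ×ˢ Y) ≤ #(Z + (Y + ξ • Y)) := by
        refine card_le_card_of_injOn (fun x => x.1 + (ξ + 1) * x.2) ?_ ?_
        · rintro ⟨x, y⟩ hx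
          simp only [coe_product, Set.mem_prod, mem_coe] at hx
          have : x + (ξ + 1) * y = x + (y + ξ • y) := by rw [smul_eq_mul]; ring
          simp only [mem_coe, this]
          exact add_mem_add hx.1 (add_mem_add hx.2 (smul_mem_smul_finset hx.2))
        · exact hinj.mono (coe_subset.2 (product_subset_product (hZX.trans hX) hY))
      rw [card_product] at h1
      exact_mod_cast h1
    have hXY : (#(X + Y) : ℝ) ≤ #(A + A) := by
      exact_mod_cast card_le_card (add_subset_add (hX.trans hA₁) (hY.trans hA₁))
    have h1 : (#Y : ℝ) ≤ 16 * (#(A + A) / #X) * (Q / #X) := by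
      refine le_of_mul_le_mul_left (a := (#Z : ℝ)) ?_ hZ0
      calc (#Z : ℝ) * #Y ≤ _ := hZY
        _ ≤ _ := hZ
        _ ≤ 16 * (#(A + A) / #X) * (Q / #X) * #Z := by gcongr
        _ = _ := by ring
    have h2 : (#Y : ℝ) * #X ^ 2 ≤ 16 * #(A + A) * Q := by
      calc (#Y : ℝ) * #X ^ 2 ≤ 16 * (#(A + A) / #X) * (Q / #X) * #X ^ 2 := by gcongr
        _ = _ := by field_simp
    calc (#A₁ : ℝ) ^ 3 = 8 * ((#A₁ : ℝ) / 2 * ((#A₁ : ℝ) / 2) ^ 2) := by ring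
      _ ≤ 8 * ((#Y : ℝ) * (#X : ℝ) ^ 2) := by gcongr
      _ ≤ 8 * (16 * #(A + A) * Q) := by gcongr
      _ ≤ 256 * #(A + A) * Q := by
        have : 0 ≤ (#(A + A) : ℝ) * Q := by positivity
        linarith

/-- The dichotomy with explicit constants and a harmonic number in place of the logarithm. -/
lemma dichotomy_of_fourfold_add {B : Finset (ZMod p)} (hB : B.Nonempty) (h0 : 0 ∉ B) {S : ℝ}
    (hS : (#(B + B) : ℝ) ≤ S) (hfour : (#(B + B + (B + B)) : ℝ) ≤ 64 * S ^ 3 / #B ^ 2) :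
    (#B : ℝ) ^ 10 * p ≤ 2 ^ 19 * S ^ 7 * #(B * B) ^ 4 * harmonic #B ^ 4 ∨
    (#B : ℝ) ^ 14 ≤ 2 ^ 22 * S ^ 8 * #(B * B) ^ 4 * harmonic #B ^ 4 * √p := by
  obtain ⟨e, -, he⟩ := exists_card_pow_three_le B hB h0
  obtain ⟨N, hN, hNB, hlevel⟩ := exists_level_sum_le B (fun a => #(a • B ∩ e • B)) hB.card_pos
    fun a _ => (card_le_card inter_subset_left).trans card_smul_finset_le
  have he' : (#B : ℝ) ^ 3 ≤ #(B * B) * ∑ a ∈ B, (#(a • B ∩ e • B) : ℝ) := by exact_mod_cast he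
  set A₁ := {a ∈ B | N ≤ #(a • B ∩ e • B)} with hA₁
  have hA₁B : A₁ ⊆ B := filter_subset _ _
  have hB0 : (0 : ℝ) < #B := by exact_mod_cast hB.card_pos
  have hN0 : (0 : ℝ) < N := by exact_mod_cast hN
  have hH0 : (0 : ℝ) < harmonic #B := by exact_mod_cast harmonic_pos hB.card_pos.ne'
  set H : ℝ := (harmonic #B : ℝ)
  set P : ℝ := (#(B * B) : ℝ)
  have hS0 : 0 ≤ S := le_trans (by positivity) hS
  have hcube : (#B : ℝ) ^ 3 ≤ P * (N * #A₁ * H) := by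
    calc (#B : ℝ) ^ 3 ≤ P * ∑ a ∈ B, (#(a • B ∩ e • B) : ℝ) := he'
      _ ≤ _ := by gcongr
  have hA₁ne : A₁.Nonempty := by
    rw [nonempty_iff_ne_empty]
    intro h
    rw [h] at hcube
    simp only [card_empty, Nat.cast_zero, mul_zero, zero_mul] at hcube
    have : (0 : ℝ) < #B ^ 3 := by positivity
    linarith
  obtain ⟨Q, hQ⟩ : ∃ Q : ℝ, Q = (4 * #(B + B) / N) ^ 4 * #(B + B + (B + B)) := ⟨_, rfl⟩
  have hQS : Q * (N ^ 4 * #B ^ 2) ≤ 2 ^ 14 * S ^ 7 := by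
    calc Q * (N ^ 4 * #B ^ 2) ≤ (4 * S / N) ^ 4 * (64 * S ^ 3 / #B ^ 2) * (N ^ 4 * #B ^ 2) := by
          rw [hQ]; gcongr
      _ = _ := by field_simp; ring
  rcases le_or_card_pow_three_le hA₁B hA₁ne h0 hN hNB (fun a ha => (mem_filter.1 ha).2) hQ with
    hp | ⟨hp, hA₁3⟩
  · left
    have hsq : (#B : ℝ) ^ 2 ≤ P * (N * H) := by
      refine le_of_mul_le_mul_left (a := (#B : ℝ)) ?_ hB0
      have : (#A₁ : ℝ) ≤ #B := by exact_mod_cast card_le_card hA₁B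
      calc (#B : ℝ) * #B ^ 2 = #B ^ 3 := by ring
        _ ≤ _ := hcube
        _ ≤ P * (N * #B * H) := by gcongr
        _ = _ := by ring
    calc (#B : ℝ) ^ 10 * p = (#B ^ 2) ^ 4 * #B ^ 2 * p := by ring
      _ ≤ (P * (N * H)) ^ 4 * #B ^ 2 * (32 * Q) := by gcongr
      _ = 32 * P ^ 4 * H ^ 4 * (Q * (N ^ 4 * #B ^ 2)) := by ring
      _ ≤ 32 * P ^ 4 * H ^ 4 * (2 ^ 14 * S ^ 7) := by gcongr
      _ = _ := by ring
  · right
    have hsqrt : (#A₁ : ℝ) ≤ √p := Real.le_sqrt_of_sq_le hp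
    have hQ0 : 0 ≤ Q := by rw [hQ]; positivity
    calc (#B : ℝ) ^ 14 = (#B ^ 3) ^ 4 * #B ^ 2 := by ring
      _ ≤ (P * (N * #A₁ * H)) ^ 4 * #B ^ 2 := by gcongr
      _ = P ^ 4 * H ^ 4 * N ^ 4 * #B ^ 2 * #A₁ ^ 3 * #A₁ := by ring
      _ ≤ P ^ 4 * H ^ 4 * N ^ 4 * #B ^ 2 * (256 * S * Q) * √p := by
        have : (#A₁ : ℝ) ^ 3 ≤ 256 * S * Q := hA₁3.trans (by gcongr)
        gcongr
      _ = 256 * P ^ 4 * H ^ 4 * S * √p * (Q * (N ^ 4 * #B ^ 2)) := by ring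
      _ ≤ 256 * P ^ 4 * H ^ 4 * S * √p * (2 ^ 14 * S ^ 7) := by gcongr
      _ = _ := by ring

/-- Passage to a large subset of nonzero elements with controlled fourfold sumset. -/
lemma exists_quarter_zero_notMem_card_fourfold_add_le {A : Finset (ZMod p)} (hA : 2 ≤ #A) :
    ∃ B ⊆ A, 0 ∉ B ∧ (#A : ℝ) / 4 ≤ #B ∧
      (#(B + B + (B + B)) : ℝ) ≤ 64 * #(A + A) ^ 3 / #B ^ 2 := by
  have hA2 : (2 : ℝ) ≤ #A := by exact_mod_cast hA
  have hpred : (#A : ℝ) - 1 ≤ #(A.erase 0) := by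
    have := pred_card_le_card_erase (s := A) (a := 0)
    have : #A ≤ #(A.erase 0) + 1 := by omega
    have : (#A : ℝ) ≤ #(A.erase 0) + 1 := by exact_mod_cast this
    linarith
  have hne : (A.erase 0).Nonempty := by
    rw [← card_pos]
    have : (0 : ℝ) < #(A.erase 0) := by linarith
    exact_mod_cast this
  obtain ⟨B, hB, hBc, hfour⟩ := exists_half_card_fourfold_add_le hne
  refine ⟨B, hB.trans (erase_subset _ _), fun h => notMem_erase _ _ (hB h), by linarith,
    hfour.trans ?_⟩
  have hB0 : (0 : ℝ) < #B := by linarith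
  have h1 : (#B : ℝ) ≤ #(A.erase 0) := by exact_mod_cast card_le_card hB
  have h2 : (#(A.erase 0 + A.erase 0) : ℝ) ≤ #(A + A) := by
    exact_mod_cast card_le_card (add_subset_add (erase_subset _ _) (erase_subset _ _))
  gcongr

end Prime

theorem large_set_dichotomy :
    ∃ c α : ℝ, 0 < c ∧ 0 ≤ α ∧ ∀ (p : ℕ), p.Prime → ∀ A : Finset (ZMod p),
      Real.sqrt p ≤ (A.card : ℝ) →
      (c * (Real.log (A.card : ℝ)) ^ (-α) * (A.card : ℝ) ^ 14 / Real.sqrt p ≤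
          ((A + A).card : ℝ) ^ 8 * ((A * A).card : ℝ) ^ 4) ∨
      (c * (Real.log (A.card : ℝ)) ^ (-α) * (A.card : ℝ) ^ 10 * (p : ℝ) ≤
          ((A + A).card : ℝ) ^ 7 * ((A * A).card : ℝ) ^ 4) := by
  refine ⟨1 / (4 ^ 14 * 2 ^ 22 * 3 ^ 4), 4, by positivity, by norm_num, fun p hp A hpA => ?_⟩
  have : Fact p.Prime := ⟨hp⟩
  have hp2 : (2 : ℝ) ≤ p := by exact_mod_cast hp.two_le
  have hA : 2 ≤ #A := by
    have h1 : (1 : ℝ) < √p := by rw [Real.lt_sqrt one_pos.le]; linarith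
    have h2 : (1 : ℝ) < #A := h1.trans_le hpA
    exact_mod_cast h2
  have hA2 : (2 : ℝ) ≤ #A := by exact_mod_cast hA
  obtain ⟨B, hBA, h0, hBc, hfour⟩ := exists_quarter_zero_notMem_card_fourfold_add_le hA
  have hB0 : (0 : ℝ) < #B := by linarith
  have hBne : B.Nonempty := card_pos.1 (by exact_mod_cast hB0)
  have hsum : (#(B + B) : ℝ) ≤ #(A + A) := by exact_mod_cast card_le_card (add_subset_add hBA hBA)
  have hprod : (#(B * B) : ℝ) ≤ #(A * A) := by exact_mod_cast card_le_card (mul_subset_mul hBA hBA)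
  have hlog : (1 : ℝ) / 2 ≤ Real.log #A := by
    have := Real.log_two_gt_d9
    have := Real.log_le_log two_pos hA2
    linarith
  have hH0 : (0 : ℝ) < harmonic #B := by exact_mod_cast harmonic_pos hBne.card_pos.ne'
  have hH : (harmonic #B : ℝ) ≤ 3 * Real.log #A := by
    have h1 := harmonic_le_one_add_log #B
    have h2 : Real.log #B ≤ Real.log #A :=
      Real.log_le_log hB0 (by exact_mod_cast card_le_card hBA)
    linarith
  set L := Real.log (#A : ℝ)
  have hL0 : 0 < L := by linarith
  have hpow : L ^ (-4 : ℝ) = (L ^ 4)⁻¹ := by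
    rw [Real.rpow_neg hL0.le]; norm_cast
  have hsqrt : 0 < √(p : ℝ) := by positivity
  have hAB : (#A : ℝ) ≤ 4 * #B := by linarith
  rw [hpow]
  rcases dichotomy_of_fourfold_add hBne h0 hsum hfour with h | h
  · right
    have h1 : (#A : ℝ) ^ 10 * p ≤
        4 ^ 14 * 2 ^ 22 * 3 ^ 4 * L ^ 4 * ((#(A + A) : ℝ) ^ 7 * (#(A * A) : ℝ) ^ 4) := by
      calc (#A : ℝ) ^ 10 * p ≤ (4 * (#B : ℝ)) ^ 10 * p := by gcongr
        _ = 4 ^ 10 * ((#B : ℝ) ^ 10 * p) := by ring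
        _ ≤ 4 ^ 14 * (2 ^ 22 * (#(A + A) : ℝ) ^ 7 * (#(A * A) : ℝ) ^ 4 * (3 * L) ^ 4) := by
          refine mul_le_mul (by norm_num) (h.trans ?_) (by positivity) (by positivity)
          gcongr
          · norm_num
          · norm_num
        _ = _ := by ring
    calc _ = (#A : ℝ) ^ 10 * p / (4 ^ 14 * 2 ^ 22 * 3 ^ 4 * L ^ 4) := by field_simp
      _ ≤ _ := by rw [div_le_iff₀' (by positivity)]; exact h1
  · left
    have h1 : (#A : ℝ) ^ 14 ≤
        4 ^ 14 * 2 ^ 22 * 3 ^ 4 * L ^ 4 * √p * ((#(A + A) : ℝ) ^ 8 * (#(A * A) : ℝ) ^ 4) := by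
      calc (#A : ℝ) ^ 14 ≤ (4 * (#B : ℝ)) ^ 14 := by gcongr
        _ = 4 ^ 14 * (#B : ℝ) ^ 14 := by ring
        _ ≤ 4 ^ 14 * (2 ^ 22 * (#(A + A) : ℝ) ^ 8 * (#(A * A) : ℝ) ^ 4 * (3 * L) ^ 4 * √p) := by
          gcongr
          refine h.trans ?_
          gcongr
        _ = _ := by ring
    calc _ = (#A : ℝ) ^ 14 / (4 ^ 14 * 2 ^ 22 * 3 ^ 4 * L ^ 4 * √p) := by field_simp
      _ ≤ _ := by rw [div_le_iff₀' (by positivity)]; exact h1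
end

section
/- For every finite A ⊆ F_p with 2 ≤ |A| ≤ p^{1/2}, the multiplicative energy satisfies E^×(A,A)⁴ ≤ C·|A|³·|A+A|⁸ for an absolute constant C, and likewise E^×(A,A)⁴ ≤ C·|A|³·|A−A|⁸. -/
open Finset Pointwise

/-- Multiplicative energy of `Y` and `Z`. -/
def paperMulEnergy {p : ℕ} (Y Z : Finset (ZMod p)) : ℕ :=
  ∑ x ∈ Y, ∑ y ∈ Y, ((Z.image (x * ·)) ∩ (Z.image (y * ·))).card

namespace SumProduct

section Group
variable {G : Type*} [AddCommGroup G] [DecidableEq G]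

theorem card_neg_add_mul_card_le (P Y W : Finset G) :
    #(-P + W) * #Y ≤ #(P + Y) * #(Y + W) := by
  have := ruzsa_triangle_inequality_sub_add_add W Y P
  rwa [sub_eq_add_neg, add_comm W (-P), add_comm W Y, mul_comm #(Y + W)] at this

/-- A form of the Plünnecke–Petridis inequality for two different summands. -/
theorem exists_subset_card_add_le_of_two {A B₁ B₂ : Finset G} (hA : A.Nonempty)
    (h₁ : B₁.Nonempty) (h₂ : B₂.Nonempty) :
    ∃ X ⊆ A, X.Nonempty ∧ ∀ C : Finset G,
      #(C + X + B₁) * #A ≤ 2 * #(A + B₁) * #(C + X) ∧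
      #(C + X + B₂) * #A ≤ 2 * #(A + B₂) * #(C + X) := by
  set k₁ := #(A + B₁) with hk₁
  set k₂ := #(A + B₂) with hk₂
  have k₁pos : 0 < k₁ := (hA.add h₁).card_pos
  have k₂pos : 0 < k₂ := (hA.add h₂).card_pos
  set H₁ : Finset ℤ := Finset.Ico 0 (k₂ : ℤ) with hH₁
  set H₂ : Finset ℤ := Finset.Ico (k₂ : ℤ) (k₂ + k₁ : ℤ) with hH₂
  set B : Finset (G × ℤ) := B₁ ×ˢ H₁ ∪ B₂ ×ˢ H₂ with hB
  have zero_add_int (H : Finset ℤ) : {0} + H = H := by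
    rw [singleton_add]
    ext
    simp
  have key : ∀ Z : Finset G, #(Z ×ˢ ({0} : Finset ℤ) + B) = #(Z + B₁) * k₂ + #(Z + B₂) * k₁ := by
    intro Z
    have e : Z ×ˢ ({0} : Finset ℤ) + B = (Z + B₁) ×ˢ H₁ ∪ (Z + B₂) ×ˢ H₂ := by
      rw [hB, add_union, Finset.product_add_product_comm, Finset.product_add_product_comm]
      rw [zero_add_int, zero_add_int]
    rw [e, card_union_of_disjoint, card_product, card_product]
    · simp [hH₁, hH₂]
    · rw [Finset.disjoint_product]
      right
      rw [Finset.disjoint_left]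
      intro x hx hx'
      simp only [hH₁, hH₂, mem_Ico] at hx hx'
      omega
  have hmem : A ∈ A.powerset.erase ∅ := mem_erase_of_ne_of_mem hA.ne_empty (mem_powerset_self _)
  obtain ⟨X, hX, hmin⟩ := exists_min_image (A.powerset.erase ∅)
    (fun U ↦ (#(U ×ˢ ({0} : Finset ℤ) + B) : ℚ) / #U) ⟨A, hmem⟩
  rw [mem_erase, mem_powerset, ← nonempty_iff_ne_empty] at hX
  obtain ⟨hXne, hXA⟩ := hX
  have hXpos : (0 : ℚ) < #X := by exact_mod_cast hXne.card_pos
  have hApos : (0 : ℚ) < #A := by exact_mod_cast hA.card_pos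
  have hpet : ∀ Z ⊆ X, #(X ×ˢ ({0} : Finset ℤ) + B) * #Z ≤ #(Z ×ˢ ({0} : Finset ℤ) + B) * #X := by
    intro Z hZ
    obtain rfl | hZne := Z.eq_empty_or_nonempty
    · simp
    have hZpos : (0 : ℚ) < #Z := by exact_mod_cast hZne.card_pos
    have := hmin Z (mem_erase_of_ne_of_mem hZne.ne_empty (mem_powerset.2 (hZ.trans hXA)))
    rw [div_le_div_iff₀ hXpos hZpos] at this
    exact_mod_cast this
  have hXle : #(X ×ˢ ({0} : Finset ℤ) + B) * #A ≤ 2 * k₁ * k₂ * #X := by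
    have := hmin A hmem
    rw [div_le_div_iff₀ hXpos hApos, key A, ← hk₁, ← hk₂] at this
    have h : #(X ×ˢ ({0} : Finset ℤ) + B) * #A ≤ (k₁ * k₂ + k₂ * k₁) * #X := by exact_mod_cast this
    linarith [h]
  refine ⟨X, hXA, hXne, fun C ↦ ?_⟩
  have hp := pluennecke_petridis_inequality_add (A := X ×ˢ ({0} : Finset ℤ)) (B := B)
    (C ×ˢ ({0} : Finset ℤ)) (by
      intro Z hZ
      obtain ⟨Z', rfl⟩ : ∃ Z' : Finset G, Z = Z' ×ˢ ({0} : Finset ℤ) := by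
        refine ⟨Z.image Prod.fst, ?_⟩
        ext ⟨a, b⟩
        have this : ∀ a b, (a, b) ∈ Z → a ∈ X ∧ b = 0 := fun a b h ↦ by
          simpa [eq_comm] using hZ h
        simp only [mem_product, mem_singleton, mem_image, Prod.exists, exists_and_right,
          exists_eq_right]
        constructor
        · intro h
          exact ⟨⟨b, h⟩, (this _ _ h).2⟩
        · rintro ⟨⟨c, hc⟩, rfl⟩
          rwa [(this _ _ hc).2] at hc
      have hZX : Z' ⊆ X := by
        intro z hz
        have := @hZ (z, 0) (by simp [hz])
        simpa using this
      have := hpet Z' hZX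
      simpa [card_product] using this)
  rw [Finset.product_add_product_comm] at hp
  simp only [singleton_add_singleton, add_zero, key, card_product, card_singleton, mul_one] at hp
  rw [← key X] at hp
  have hXpos' : 0 < #X := hXne.card_pos
  have fin : (#(C + X + B₁) * k₂ + #(C + X + B₂) * k₁) * #A ≤ 2 * k₁ * k₂ * #(C + X) := by
    refine Nat.le_of_mul_le_mul_right ?_ hXpos'
    calc _ = (#(C + X + B₁) * k₂ + #(C + X + B₂) * k₁) * #X * #A := by ring
      _ ≤ #(X ×ˢ ({0} : Finset ℤ) + B) * #(C + X) * #A := by gcongr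
      _ = #(X ×ˢ ({0} : Finset ℤ) + B) * #A * #(C + X) := by ring
      _ ≤ 2 * k₁ * k₂ * #X * #(C + X) := by gcongr
      _ = _ := by ring
  constructor
  · refine Nat.le_of_mul_le_mul_right ?_ k₂pos
    calc _ = #(C + X + B₁) * k₂ * #A := by ring
      _ ≤ (#(C + X + B₁) * k₂ + #(C + X + B₂) * k₁) * #A := by gcongr; omega
      _ ≤ _ := fin
      _ = _ := by ring
  · refine Nat.le_of_mul_le_mul_right ?_ k₁pos
    calc _ = #(C + X + B₂) * k₁ * #A := by ring
      _ ≤ (#(C + X + B₁) * k₂ + #(C + X + B₂) * k₁) * #A := by gcongr; omega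
      _ ≤ _ := fin
      _ = _ := by ring

theorem exists_subset_card_add_add_le {A B₁ B₂ : Finset G} (hA : A.Nonempty)
    (h₁ : B₁.Nonempty) (h₂ : B₂.Nonempty) :
    ∃ X ⊆ A, X.Nonempty ∧ #(X + B₁ + B₂) * #A ^ 2 ≤ 4 * #(A + B₁) * #(A + B₂) * #X := by
  obtain ⟨X, hXA, hX, h⟩ := exists_subset_card_add_le_of_two hA h₁ h₂
  refine ⟨X, hXA, hX, ?_⟩
  have e₁ := (h {0}).1
  have e₂ := (h B₁).2
  rw [add_comm B₁ X] at e₂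
  simp only [singleton_zero, zero_add] at e₁
  calc _ = #(X + B₁ + B₂) * #A * #A := by ring
    _ ≤ 2 * #(A + B₂) * #(X + B₁) * #A := by gcongr
    _ = 2 * #(A + B₂) * (#(X + B₁) * #A) := by ring
    _ ≤ 2 * #(A + B₂) * (2 * #(A + B₁) * #X) := by gcongr
    _ = _ := by ring

theorem exists_subset_card_add_three_le {A B : Finset G} (hA : A.Nonempty) (hB : B.Nonempty) :
    ∃ X ⊆ A, X.Nonempty ∧ #(X + B + B + B) * #A ^ 3 ≤ 8 * #(A + B) ^ 3 * #X := by
  obtain ⟨X, hXA, hX, h⟩ := exists_subset_card_add_le_of_two hA hB hB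
  refine ⟨X, hXA, hX, ?_⟩
  have e₁ := (h {0}).1
  have e₂ := (h B).2
  have e₃ := (h (B + B)).1
  rw [add_comm B X] at e₂
  rw [add_comm (B + B) X, ← add_assoc] at e₃
  simp only [singleton_zero, zero_add] at e₁
  calc _ = #(X + B + B + B) * #A * #A ^ 2 := by ring
    _ ≤ 2 * #(A + B) * #(X + B + B) * #A ^ 2 := by gcongr
    _ = 2 * #(A + B) * (#(X + B + B) * #A) * #A := by ring
    _ ≤ 2 * #(A + B) * (2 * #(A + B) * #(X + B)) * #A := by gcongr
    _ = 4 * #(A + B) ^ 2 * (#(X + B) * #A) := by ring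
    _ ≤ 4 * #(A + B) ^ 2 * (2 * #(A + B) * #X) := by gcongr
    _ = _ := by ring

/-- A large subset with small growth under threefold addition of `B`. -/
theorem exists_large_subset_card_add_three_le {A B : Finset G} (hB : B.Nonempty) :
    ∃ X ⊆ A, #A ≤ 2 * #X ∧ #(X + B + B + B) * #A ^ 2 ≤ 64 * #(A + B) ^ 3 := by
  have main : ∃ X ∈ A.powerset.filter
      (fun X ↦ #(X + B + B + B) * #A ^ 3 ≤ 64 * #(A + B) ^ 3 * #X), ∀ Y ∈ A.powerset.filter
      (fun X ↦ #(X + B + B + B) * #A ^ 3 ≤ 64 * #(A + B) ^ 3 * #X), #Y ≤ #X :=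
    exists_max_image _ _ ⟨∅, by simp⟩
  obtain ⟨X, hX, hmax⟩ := main
  rw [mem_filter, mem_powerset] at hX
  have hlarge : #A ≤ 2 * #X := by
    by_contra! hlt
    have hc := card_sdiff_add_card_eq_card hX.1
    have hne : (A \ X).Nonempty := by rw [← card_pos]; omega
    obtain ⟨Z, hZA, hZ, h⟩ := exists_subset_card_add_three_le hne hB
    have hdis : Disjoint X Z := disjoint_of_subset_right hZA disjoint_sdiff
    have := hmax (X ∪ Z) (by
      rw [mem_filter, mem_powerset]
      refine ⟨union_subset hX.1 (hZA.trans sdiff_subset), ?_⟩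
      rw [union_add, union_add, union_add, card_union_of_disjoint hdis]
      have h' : #(Z + B + B + B) * #A ^ 3 ≤ 64 * #(A + B) ^ 3 * #Z := by
        calc _ ≤ #(Z + B + B + B) * (2 * #(A \ X)) ^ 3 := by gcongr; omega
          _ = 8 * (#(Z + B + B + B) * #(A \ X) ^ 3) := by ring
          _ ≤ 8 * (8 * #(A \ X + B) ^ 3 * #Z) := by gcongr
          _ ≤ 8 * (8 * #(A + B) ^ 3 * #Z) := by gcongr; exact sdiff_subset
          _ = _ := by ring
      calc _ ≤ (#(X + B + B + B) + #(Z + B + B + B)) * #A ^ 3 := by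
            gcongr; exact card_union_le _ _
        _ ≤ _ := by linarith [hX.2])
    rw [card_union_of_disjoint hdis] at this
    have := hZ.card_pos
    omega
  refine ⟨X, hX.1, hlarge, ?_⟩
  obtain h0 | hpos := Nat.eq_zero_or_pos #A
  · simp [h0]
  refine Nat.le_of_mul_le_mul_right ?_ hpos
  calc _ = #(X + B + B + B) * #A ^ 3 := by ring
    _ ≤ 64 * #(A + B) ^ 3 * #X := hX.2
    _ ≤ 64 * #(A + B) ^ 3 * #A := by gcongr; exact hX.1

end Group

theorem card_sq_le_card_image_mul_card_collisions {α β : Type*} [DecidableEq β]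
    (s : Finset α) (f : α → β) :
    #s ^ 2 ≤ #(s.image f) * #{q ∈ s ×ˢ s | f q.1 = f q.2} := by
  have h₁ : #s = ∑ w ∈ s.image f, #{x ∈ s | f x = w} :=
    card_eq_sum_card_fiberwise fun x hx ↦ mem_image_of_mem f hx
  have h₂ : #{q ∈ s ×ˢ s | f q.1 = f q.2} = ∑ w ∈ s.image f, #{x ∈ s | f x = w} ^ 2 := by
    rw [card_eq_sum_card_fiberwise (f := fun q ↦ f q.1) (t := s.image f)]
    · refine sum_congr rfl fun w _ ↦ ?_
      rw [sq, ← card_product]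
      congr 1
      ext ⟨x, y⟩
      simp only [mem_filter, mem_product]
      grind
    · intro q hq
      simp only [coe_filter, mem_product, Set.mem_ofPred_eq] at hq
      exact mem_image_of_mem f hq.1.1
  rw [h₂]
  nth_rw 1 [h₁]
  exact sq_sum_le_card_mul_sum_sq

section Field
variable {p : ℕ} [Fact p.Prime]

theorem exists_card_sq_le_two_mul_card_add_smul (t : Finset (ZMod p)) (ht : #t ^ 2 ≤ p) :
    ∃ ξ : ZMod p, #t ^ 2 ≤ 2 * #(t + ξ • t) := by
  set T := t ×ˢ t with hT
  have hTc : #T = #t ^ 2 := by rw [hT, card_product, sq]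
  let coll (ξ : ZMod p) := #{q ∈ T ×ˢ T | q.1.1 + ξ * q.1.2 = q.2.1 + ξ * q.2.2}
  have hsum : ∑ ξ : ZMod p, coll ξ ≤ ∑ ξ : ZMod p, 2 * #T := by
    have h₁ : ∑ ξ : ZMod p, coll ξ
        = ∑ q ∈ T ×ˢ T, #{ξ : ZMod p | q.1.1 + ξ * q.1.2 = q.2.1 + ξ * q.2.2} := by
      simp only [coll, card_filter]
      exact sum_comm
    have h₂ : ∀ q ∈ T ×ˢ T, #{ξ : ZMod p | q.1.1 + ξ * q.1.2 = q.2.1 + ξ * q.2.2}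
        ≤ (if q.1 = q.2 then p else 0) + 1 := by
      rintro ⟨⟨x, z⟩, x', z'⟩ -
      split_ifs with h
      · exact (card_le_univ _).trans (by rw [ZMod.card]; omega)
      · rw [zero_add, card_le_one]
        intro ξ hξ η hη
        simp only [mem_filter, mem_univ, true_and] at hξ hη
        have hz : z ≠ z' := by
          rintro rfl
          exact h (by simpa using hξ)
        have : (ξ - η) * (z - z') = 0 := by linear_combination hξ - hη
        rcases mul_eq_zero.1 this with h' | h'
        · exact sub_eq_zero.1 h'
        · exact absurd (sub_eq_zero.1 h') hz
    have h₃ : ∑ q ∈ T ×ˢ T, (if q.1 = q.2 then p else 0) = #T * p := by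
      rw [sum_product]
      simp
    calc _ = _ := h₁
      _ ≤ ∑ q ∈ T ×ˢ T, ((if q.1 = q.2 then p else 0) + 1) := sum_le_sum h₂
      _ = #T * p + #T * #T := by rw [sum_add_distrib, h₃]; simp
      _ ≤ #T * p + #T * p := by gcongr; rwa [hTc]
      _ = _ := by simp [ZMod.card]; ring
  obtain ⟨ξ, -, hξ⟩ := exists_le_of_sum_le ⟨0, mem_univ _⟩ hsum
  refine ⟨ξ, ?_⟩
  obtain h0 | hpos := Nat.eq_zero_or_pos #T
  · omega
  have himg : T.image (fun x ↦ x.1 + ξ * x.2) = t + ξ • t := by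
    ext w
    simp only [hT, mem_image, mem_product, mem_add, mem_smul_finset, smul_eq_mul, Prod.exists]
    grind
  have := card_sq_le_card_image_mul_card_collisions T (fun x ↦ x.1 + ξ * x.2)
  rw [himg] at this
  refine Nat.le_of_mul_le_mul_right ?_ hpos
  calc #t ^ 2 * #T = #T ^ 2 := by rw [← hTc, sq]
    _ ≤ #(t + ξ • t) * coll ξ := this
    _ ≤ #(t + ξ • t) * (2 * #T) := by gcongr
    _ = _ := by ring

/-- `ξ` is a quotient of two differences of elements of `t`. -/
def IsDiffRatio (t : Finset (ZMod p)) (ξ : ZMod p) : Prop :=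
  ∃ a ∈ t, ∃ b ∈ t, ∃ c ∈ t, ∃ d ∈ t, c ≠ d ∧ ξ * (c - d) = a - b

theorem IsDiffRatio.zero {t : Finset (ZMod p)} (ht : 2 ≤ #t) : IsDiffRatio t 0 := by
  obtain ⟨a, ha, b, hb, hab⟩ := one_lt_card.1 ht
  exact ⟨a, ha, a, ha, a, ha, b, hb, hab, by simp⟩

theorem exists_isDiffRatio_and_not_add_one {t : Finset (ZMod p)} (ht : 2 ≤ #t)
    (h : ¬ ∀ ξ, IsDiffRatio t ξ) : ∃ ξ, IsDiffRatio t ξ ∧ ¬ IsDiffRatio t (ξ + 1) := by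
  contrapose! h
  intro ξ
  rw [← ZMod.natCast_zmod_val ξ]
  induction ξ.val with
  | zero => simpa using IsDiffRatio.zero ht
  | succ k ih => simpa using h _ ih

theorem exists_card_pow_three_le {t t' : Finset (ZMod p)} (ht : 2 ≤ #t) (htp : #t ^ 2 ≤ p)
    (ht' : t' = t ∨ t' = -t) :
    ∃ a ∈ t, ∃ b ∈ t, ∃ c ∈ t, ∃ d ∈ t,
      #t ^ 3 ≤ 4 * #(t + t') * #((a - b) • t + (c - d) • t) := by
  have htne : t.Nonempty := card_pos.1 (by omega)
  by_cases hR : ∀ ξ, IsDiffRatio t ξ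
  · obtain ⟨ξ, hξ⟩ := exists_card_sq_le_two_mul_card_add_smul t htp
    obtain ⟨a, ha, b, hb, c, hc, d, hd, hcd, h⟩ := hR ξ
    refine ⟨a, ha, b, hb, c, hc, d, hd, ?_⟩
    have e : (a - b) • t + (c - d) • t = (c - d) • (t + ξ • t) := by
      rw [smul_add, smul_smul, mul_comm, h, add_comm]
    rw [e, card_smul_finset₀ (sub_ne_zero.2 hcd)]
    have ht'ne : t'.Nonempty := by rcases ht' with rfl | rfl <;> simpa
    have : #t ≤ #(t + t') := card_le_card_add_right ht'ne
    calc #t ^ 3 = #t * #t ^ 2 := by ring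
      _ ≤ #(t + t') * (2 * #(t + ξ • t)) := by gcongr
      _ ≤ _ := by nlinarith
  · obtain ⟨ξ, ⟨a, ha, b, hb, c, hc, d, hd, hcd, h⟩, hn⟩ :=
      exists_isDiffRatio_and_not_add_one ht hR
    have hcd' := sub_ne_zero.2 hcd
    obtain ⟨s, hs, rfl⟩ : ∃ s : ZMod p, (s = 1 ∨ s = -1) ∧ t' = s • t := by
      rcases ht' with rfl | rfl
      · exact ⟨1, .inl rfl, (one_smul _ _).symm⟩
      · exact ⟨-1, .inr rfl, by simp⟩
    have hst : (s • t).Nonempty := htne.smul_finset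
    obtain ⟨X, hX, hXne, hXle⟩ := exists_subset_card_add_add_le (A := (c - d) • t)
      (B₁ := (c - d) • (s • t)) (B₂ := (s * (a - b)) • t)
      htne.smul_finset hst.smul_finset htne.smul_finset
    rw [← smul_add, card_smul_finset₀ hcd', card_smul_finset₀ hcd'] at hXle
    have hinj : #X * #t ≤ #(X + (c - d) • (s • t) + (s * (a - b)) • t) := by
      rw [← card_product]
      refine card_le_card_of_injOn
        (fun x ↦ x.1 + (c - d) * (s * x.2) + (s * (a - b)) * x.2) ?_ ?_
      · rintro ⟨x, z⟩ hxz
        simp only [coe_product, Set.mem_prod, mem_coe] at hxz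
        exact add_mem_add (add_mem_add hxz.1
          (smul_mem_smul_finset (smul_mem_smul_finset hxz.2))) (smul_mem_smul_finset hxz.2)
      · rintro ⟨x, z⟩ hxz ⟨x', z'⟩ hxz' heq
        simp only [coe_product, Set.mem_prod, mem_coe] at hxz hxz' heq
        obtain ⟨u, hu, hux⟩ := mem_smul_finset.1 (hX hxz.1)
        obtain ⟨u', hu', hux'⟩ := mem_smul_finset.1 (hX hxz'.1)
        simp only [smul_eq_mul] at hux hux'
        by_cases hz : z = z'
        · subst hz
          simpa using heq
        · exfalso
          have hz' := sub_ne_zero.2 hz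
          have e : s * (ξ + 1) * (z - z') = u' - u := by
            refine mul_left_cancel₀ hcd' ?_
            linear_combination heq + hux - hux' + s * (z - z') * h
          rcases hs with rfl | rfl
          · exact hn ⟨u', hu', u, hu, z, hxz.2, z', hxz'.2, hz, by linear_combination e⟩
          · exact hn ⟨u, hu, u', hu', z, hxz.2, z', hxz'.2, hz, by linear_combination -e⟩
    have fin : #t ^ 3 ≤ 4 * #(t + s • t) * #((c - d) • t + (s * (a - b)) • t) := by
      refine Nat.le_of_mul_le_mul_right ?_ hXne.card_pos
      calc _ = #X * #t * #t ^ 2 := by ring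
        _ ≤ _ := by gcongr
        _ ≤ _ := hXle
    rw [add_comm ((c - d) • t)] at fin
    rcases hs with rfl | rfl
    · exact ⟨a, ha, b, hb, c, hc, d, hd, by simpa using fin⟩
    · refine ⟨b, hb, a, ha, c, hc, d, hd, ?_⟩
      rwa [show -1 * (a - b) = b - a by ring] at fin

theorem card_smul_add_mul_le {A B W : Finset (ZMod p)} {x : ZMod p} {Z : Finset (ZMod p)}
    (hZ : Z ⊆ x • B) : #(x • A + W) * #Z ≤ #(A + B) * #(Z + W) := by
  refine (ruzsa_triangle_inequality_add_add_add _ Z _).trans (Nat.mul_le_mul_right _ ?_)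
  calc _ ≤ #(x • A + x • B) := by gcongr
    _ = #(x • (A + B)) := by rw [smul_add]
    _ ≤ _ := card_image_le

theorem card_neg_smul_add_mul_le {A B W : Finset (ZMod p)} {x : ZMod p} {Z : Finset (ZMod p)}
    (hZ : Z ⊆ x • B) : #(-(x • A) + W) * #Z ≤ #(A + B) * #(Z + W) := by
  refine (card_neg_add_mul_card_le _ Z _).trans (Nat.mul_le_mul_right _ ?_)
  calc _ ≤ #(x • A + x • B) := by gcongr
    _ = #(x • (A + B)) := by rw [smul_add]
    _ ≤ _ := card_image_le

theorem sub_smul_subset {A t : Finset (ZMod p)} (ht : t ⊆ A) (a b : ZMod p) :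
    (a - b) • t ⊆ a • A + -(b • A) := by
  intro w hw
  obtain ⟨x, hx, rfl⟩ := mem_smul_finset.1 hw
  rw [smul_eq_mul, sub_mul, sub_eq_add_neg]
  exact add_mem_add (smul_mem_smul_finset (ht hx)) (neg_mem_neg (smul_mem_smul_finset (ht hx)))

theorem pow_four_mul_card_le {A B X t : Finset (ZMod p)} (hB : B = A ∨ B = -A) (hX : X ⊆ A)
    (ht : t ⊆ A) {y : ZMod p} {N : ℕ} (hN : ∀ x ∈ t, N ≤ #(x • A ∩ y • X))
    {a b c d : ZMod p} (ha : a ∈ t) (hb : b ∈ t) (hc : c ∈ t) (hd : d ∈ t) :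
    N ^ 4 * #((a - b) • t + (c - d) • t) ≤ #(A + B) ^ 4 * #(X + B + B + B) := by
  have first : ∀ x ∈ t, ∀ W, #(x • A + W) * N ≤ #(A + B) * #(y • X + W) := by
    intro x hx W
    set Y := x • A ∩ y • X with hY
    have hYA : Y ⊆ x • A := inter_subset_left
    calc _ ≤ #(x • A + W) * #Y := by gcongr; exact hN x hx
      _ ≤ #(A + B) * #(Y + W) := by
        rcases hB with rfl | rfl
        · exact card_smul_add_mul_le hYA
        · have := card_neg_smul_add_mul_le (A := -A) (W := W) hYA
          rwa [smul_finset_neg, neg_neg, add_comm (-A)] at this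
      _ ≤ _ := by gcongr; exact inter_subset_right
  have others : ∀ x ∈ t, ∃ Z, Z ⊆ x • B ∧ Z ⊆ y • B ∧ N ≤ #Z := by
    intro x hx
    rcases hB with rfl | rfl
    · exact ⟨_, inter_subset_left, inter_subset_right.trans (smul_finset_subset_smul_finset hX),
        hN x hx⟩
    · refine ⟨-(x • A ∩ y • X), ?_, ?_, by rw [card_neg]; exact hN x hx⟩
      · rw [smul_finset_neg]
        exact neg_subset_neg inter_subset_left
      · rw [smul_finset_neg]
        exact neg_subset_neg (inter_subset_right.trans (smul_finset_subset_smul_finset hX))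
  have pos : ∀ x ∈ t, ∀ W, #(x • A + W) * N ≤ #(A + B) * #(y • B + W) := by
    intro x hx W
    obtain ⟨Z, hZx, hZy, hZN⟩ := others x hx
    calc _ ≤ #(x • A + W) * #Z := by gcongr
      _ ≤ #(A + B) * #(Z + W) := card_smul_add_mul_le hZx
      _ ≤ _ := by gcongr
  have neg : ∀ x ∈ t, ∀ W, #(-(x • A) + W) * N ≤ #(A + B) * #(y • B + W) := by
    intro x hx W
    obtain ⟨Z, hZx, hZy, hZN⟩ := others x hx
    calc _ ≤ #(-(x • A) + W) * #Z := by gcongr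
      _ ≤ #(A + B) * #(Z + W) := card_neg_smul_add_mul_le hZx
      _ ≤ _ := by gcongr
  set S := #(A + B)
  have h₀ : #((a - b) • t + (c - d) • t) ≤ #(a • A + (-(b • A) + (c • A + -(d • A)))) := by
    rw [← add_assoc]
    exact card_le_card (add_subset_add (sub_smul_subset ht a b) (sub_smul_subset ht c d))
  have h₁ := first a ha (-(b • A) + (c • A + -(d • A)))
  have h₂ := neg b hb (c • A + -(d • A) + y • X)
  have h₃ := pos c hc (-(d • A) + y • X + y • B)
  have h₄ := neg d hd (y • X + y • B + y • B)
  rw [show -(b • A) + (c • A + -(d • A) + y • X) = y • X + (-(b • A) + (c • A + -(d • A))) by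
    ac_rfl] at h₂
  rw [show c • A + (-(d • A) + y • X + y • B) = y • B + (c • A + -(d • A) + y • X) by
    ac_rfl] at h₃
  rw [show -(d • A) + (y • X + y • B + y • B) = y • B + (-(d • A) + y • X + y • B) by
    ac_rfl] at h₄
  have h₅ : #(y • B + (y • X + y • B + y • B)) ≤ #(X + B + B + B) := by
    rw [show y • B + (y • X + y • B + y • B) = y • (X + B + B + B) by
      simp only [smul_add]; ac_rfl]
    exact card_image_le
  calc _ ≤ N ^ 4 * #(a • A + (-(b • A) + (c • A + -(d • A)))) := by gcongr
    _ = #(a • A + (-(b • A) + (c • A + -(d • A)))) * N * N ^ 3 := by ring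
    _ ≤ S * _ * N ^ 3 := by gcongr
    _ = S * (#(y • X + (-(b • A) + (c • A + -(d • A)))) * N) * N ^ 2 := by ring
    _ ≤ S * (S * _) * N ^ 2 := by gcongr
    _ = S ^ 2 * (#(y • B + (c • A + -(d • A) + y • X)) * N) * N := by ring
    _ ≤ S ^ 2 * (S * _) * N := by gcongr
    _ = S ^ 3 * (#(y • B + (-(d • A) + y • X + y • B)) * N) := by ring
    _ ≤ S ^ 3 * (S * _) := by gcongr
    _ ≤ S ^ 3 * (S * #(X + B + B + B)) := by gcongr
    _ = _ := by ring

theorem card_pow_three_mul_pow_four_le {A B X t : Finset (ZMod p)} (hA : #A ^ 2 ≤ p)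
    (hB : B = A ∨ B = -A) (hX : X ⊆ A) (hX3 : #(X + B + B + B) * #A ^ 2 ≤ 64 * #(A + B) ^ 3)
    (ht : t ⊆ A) (htne : t.Nonempty) {y : ZMod p} {N : ℕ}
    (hN : ∀ x ∈ t, N ≤ #(x • A ∩ y • X)) :
    #t ^ 3 * N ^ 4 * #A ^ 2 ≤ 256 * #(A + B) ^ 8 := by
  have hAne := htne.mono ht
  have hBne : B.Nonempty := by rcases hB with rfl | rfl <;> simpa
  have hAS : #A ≤ #(A + B) := card_le_card_add_right hBne
  obtain h1 | h2 : #t = 1 ∨ 2 ≤ #t := by have := htne.card_pos; omega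
  · obtain ⟨x, hx⟩ := htne
    have hNA : N ≤ #A :=
      (hN x hx).trans ((card_le_card inter_subset_left).trans card_image_le)
    have hApos := hAne.card_pos
    calc _ ≤ 1 ^ 3 * #A ^ 4 * #A ^ 2 := by rw [h1]; gcongr
      _ = #A ^ 6 := by ring
      _ ≤ #A ^ 8 := Nat.pow_le_pow_right hApos (by norm_num)
      _ ≤ #(A + B) ^ 8 := by gcongr
      _ ≤ _ := by omega
  · have htp : #t ^ 2 ≤ p := le_trans (by gcongr) hA
    obtain ⟨t', ht', htt'⟩ : ∃ t', (t' = t ∨ t' = -t) ∧ t' ⊆ B := by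
      rcases hB with rfl | rfl
      · exact ⟨t, .inl rfl, ht⟩
      · exact ⟨-t, .inr rfl, neg_subset_neg ht⟩
    obtain ⟨a, ha, b, hb, c, hc, d, hd, h⟩ := exists_card_pow_three_le h2 htp ht'
    have hU := pow_four_mul_card_le hB hX ht hN ha hb hc hd
    calc _ ≤ (4 * #(t + t') * #((a - b) • t + (c - d) • t)) * N ^ 4 * #A ^ 2 := by gcongr
      _ ≤ (4 * #(A + B) * #((a - b) • t + (c - d) • t)) * N ^ 4 * #A ^ 2 := by gcongr
      _ = 4 * #(A + B) * (N ^ 4 * #((a - b) • t + (c - d) • t)) * #A ^ 2 := by ring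
      _ ≤ 4 * #(A + B) * (#(A + B) ^ 4 * #(X + B + B + B)) * #A ^ 2 := by gcongr
      _ = 4 * #(A + B) ^ 5 * (#(X + B + B + B) * #A ^ 2) := by ring
      _ ≤ 4 * #(A + B) ^ 5 * (64 * #(A + B) ^ 3) := by gcongr
      _ = _ := by ring

end Field

theorem sqrt_sqrt_pow_four {x : ℝ} (hx : 0 ≤ x) : √√x ^ 4 = x := by
  rw [show √√x ^ 4 = (√√x ^ 2) ^ 2 by ring, Real.sq_sqrt (by positivity), Real.sq_sqrt hx]

/-- A weak-type bound for `f` on all subsets of `s` bounds the sum of `f` without logarithmic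
loss. -/
theorem sum_le_of_forall_subset {α : Type*} [DecidableEq α] (f : α → ℕ) {l : ℝ} (hl : 0 ≤ l)
    (s : Finset α) (h : ∀ t ⊆ s, t.Nonempty → ∀ N : ℕ, (∀ x ∈ t, N ≤ f x) →
      √√(#t : ℝ) ^ 3 * N ≤ l) :
    ((∑ x ∈ s, f x : ℕ) : ℝ) ≤ 4 * l * √√(#s : ℝ) := by
  induction s using Finset.eraseInduction with
  | H s ih =>
  obtain rfl | hs := s.eq_empty_or_nonempty
  · simp
  obtain ⟨x, hx, hmin⟩ := exists_min_image s f hs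
  have h₁ := ih x hx fun t ht ↦ h t (ht.trans (erase_subset _ _))
  have h₂ := h s subset_rfl hs (f x) hmin
  rw [← add_sum_erase s f hx, Nat.cast_add]
  have hcard : (#s : ℝ) = #(s.erase x) + 1 := by
    rw [← card_erase_add_one hx]
    push_cast
    ring
  set u := √√(#s : ℝ)
  set v := √√(#(s.erase x) : ℝ)
  have hu4 : u ^ 4 = #s := sqrt_sqrt_pow_four (by positivity)
  have hv4 : v ^ 4 = #(s.erase x) := sqrt_sqrt_pow_four (by positivity)
  have hupos : 0 < u := Real.sqrt_pos.2 (Real.sqrt_pos.2 (by exact_mod_cast hs.card_pos))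
  have hv0 : 0 ≤ v := Real.sqrt_nonneg _
  have huv : v ≤ u := Real.sqrt_le_sqrt (Real.sqrt_le_sqrt (by linarith))
  clear_value u v
  have h3 : 1 ≤ 4 * u ^ 3 * (u - v) := by
    have e : (1 : ℝ) = (u - v) * (u ^ 3 + u ^ 2 * v + u * v ^ 2 + v ^ 3) := by
      linear_combination -hcard - hu4 + hv4
    have : u ^ 3 + u ^ 2 * v + u * v ^ 2 + v ^ 3 ≤ 4 * u ^ 3 := by
      have a1 : u ^ 2 * v ≤ u ^ 2 * u := by gcongr
      have a2 : u * v ^ 2 ≤ u * u ^ 2 := by gcongr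
      have a3 : v ^ 3 ≤ u ^ 3 := by gcongr
      linarith
    rw [e, mul_comm]
    exact mul_le_mul_of_nonneg_right this (sub_nonneg.2 huv)
  have h4 : (f x : ℝ) ≤ 4 * l * (u - v) := by
    refine le_of_mul_le_mul_left ?_ (pow_pos hupos 3)
    calc u ^ 3 * f x ≤ l * 1 := by linarith
      _ ≤ l * (4 * u ^ 3 * (u - v)) := by gcongr
      _ = _ := by ring
  linarith

section Energy
variable {p : ℕ} [Fact p.Prime]

theorem sum_card_inter_le {A B X : Finset (ZMod p)} (hA : #A ^ 2 ≤ p)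
    (hB : B = A ∨ B = -A) (hX : X ⊆ A) (hX3 : #(X + B + B + B) * #A ^ 2 ≤ 64 * #(A + B) ^ 3) :
    ((∑ y ∈ A, ∑ x ∈ A, #(x • A ∩ y • X) : ℕ) : ℝ) ≤ 16 * √√(#A : ℝ) ^ 3 * (#(A + B) : ℝ) ^ 2 := by
  obtain rfl | hne := A.eq_empty_or_nonempty
  · simp
  have hu4 : √√(#A : ℝ) ^ 4 = #A := sqrt_sqrt_pow_four (by positivity)
  have hupos : 0 < √√(#A : ℝ) :=
    Real.sqrt_pos.2 (Real.sqrt_pos.2 (by exact_mod_cast hne.card_pos))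
  have each : ∀ y ∈ A, ((∑ x ∈ A, #(x • A ∩ y • X) : ℕ) : ℝ)
      ≤ 4 * (4 * (#(A + B) : ℝ) ^ 2 / √√(#A : ℝ) ^ 2) * √√(#A : ℝ) := by
    intro y _
    refine sum_le_of_forall_subset _ (by positivity) _ fun t ht htne N hN ↦ ?_
    have h := card_pow_three_mul_pow_four_le hA hB hX hX3 ht htne hN
    have h' : (#t : ℝ) ^ 3 * N ^ 4 * #A ^ 2 ≤ 256 * #(A + B) ^ 8 := by exact_mod_cast h
    have ht4 : √√(#t : ℝ) ^ 4 = #t := sqrt_sqrt_pow_four (by positivity)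
    rw [le_div_iff₀ (by positivity)]
    refine le_of_pow_le_pow_left₀ (n := 4) (by norm_num) (by positivity) ?_
    calc _ = (√√(#t : ℝ) ^ 4) ^ 3 * N ^ 4 * (√√(#A : ℝ) ^ 4) ^ 2 := by ring
      _ ≤ 256 * (#(A + B) : ℝ) ^ 8 := by rw [ht4, hu4]; exact h'
      _ = _ := by ring
  rw [Nat.cast_sum]
  calc _ ≤ ∑ y ∈ A, 4 * (4 * (#(A + B) : ℝ) ^ 2 / √√(#A : ℝ) ^ 2) * √√(#A : ℝ) := sum_le_sum each
    _ = √√(#A : ℝ) ^ 4 * (4 * (4 * (#(A + B) : ℝ) ^ 2 / √√(#A : ℝ) ^ 2) * √√(#A : ℝ)) := by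
      rw [sum_const, nsmul_eq_mul, hu4]
    _ = _ := by field_simp; ring

/-- The number of solutions of `x * u = y * v` with `x, y, u, v` in prescribed sets. -/
def mulQuadruples (P Q U V : Finset (ZMod p)) : ℕ :=
  #{z ∈ (P ×ˢ Q) ×ˢ U ×ˢ V | z.1.1 * z.2.1 = z.1.2 * z.2.2}

theorem mulQuadruples_swap (P Q U V : Finset (ZMod p)) :
    mulQuadruples P Q U V = mulQuadruples Q P V U := by
  refine card_nbij' (fun z ↦ ((z.1.2, z.1.1), z.2.2, z.2.1))
    (fun z ↦ ((z.1.2, z.1.1), z.2.2, z.2.1)) ?_ ?_ ?_ ?_ <;>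
  · rintro ⟨⟨x, y⟩, u, v⟩ h
    simp only [coe_filter, mem_product, Set.mem_ofPred_eq] at h ⊢
    try tauto

theorem mulQuadruples_comm (P Q U V : Finset (ZMod p)) :
    mulQuadruples P Q U V = mulQuadruples U V P Q := by
  refine card_nbij' (fun z ↦ (z.2, z.1)) (fun z ↦ (z.2, z.1)) ?_ ?_ ?_ ?_ <;>
  · rintro ⟨⟨x, y⟩, u, v⟩ h
    simp only [coe_filter, mem_product, Set.mem_ofPred_eq, mul_comm u x,
      mul_comm v y] at h ⊢
    try tauto

theorem mulQuadruples_eq_sum {P Q : Finset (ZMod p)} (hP : 0 ∉ P) (hQ : 0 ∉ Q)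
    (U V : Finset (ZMod p)) :
    mulQuadruples P Q U V = ∑ x ∈ P, ∑ y ∈ Q, #(x • U ∩ y • V) := by
  rw [mulQuadruples, card_filter, sum_product, sum_product]
  refine sum_congr rfl fun x hx ↦ sum_congr rfl fun y hy ↦ ?_
  rw [← card_filter]
  have hx0 : x ≠ 0 := by rintro rfl; exact hP hx
  have hy0 : y ≠ 0 := by rintro rfl; exact hQ hy
  refine card_bij (fun z _ ↦ x * z.1) ?_ ?_ ?_
  · rintro ⟨u, v⟩ h
    simp only [mem_filter, mem_product] at h
    rw [mem_inter]
    exact ⟨smul_mem_smul_finset h.1.1, h.2 ▸ smul_mem_smul_finset h.1.2⟩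
  · rintro ⟨u, v⟩ h ⟨u', v'⟩ h' e
    simp only [mem_filter, mem_product] at h h' e
    obtain rfl := mul_left_cancel₀ hx0 e
    rw [mul_left_cancel₀ hy0 (h.2.symm.trans h'.2)]
  · intro w hw
    simp only [mem_inter, mem_smul_finset, smul_eq_mul] at hw
    obtain ⟨⟨u, hu, rfl⟩, v, hv, h⟩ := hw
    exact ⟨(u, v), by simp [hu, hv, h], rfl⟩

theorem mulQuadruples_le (A X : Finset (ZMod p)) :
    mulQuadruples A A A A ≤ 4 * mulQuadruples A A A X +
      mulQuadruples (A \ X) (A \ X) (A \ X) (A \ X) := by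
  have e₁ : mulQuadruples A A X A = mulQuadruples A A A X := mulQuadruples_swap ..
  have e₂ : mulQuadruples A X A A = mulQuadruples A A A X := mulQuadruples_comm ..
  have e₃ : mulQuadruples X A A A = mulQuadruples A A A X :=
    (mulQuadruples_comm ..).trans e₁
  suffices mulQuadruples A A A A ≤ mulQuadruples A A A X + mulQuadruples A A X A +
      mulQuadruples A X A A + mulQuadruples X A A A +
      mulQuadruples (A \ X) (A \ X) (A \ X) (A \ X) by omega
  have hsub : {z ∈ (A ×ˢ A) ×ˢ A ×ˢ A | z.1.1 * z.2.1 = z.1.2 * z.2.2} ⊆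
      {z ∈ (A ×ˢ A) ×ˢ A ×ˢ X | z.1.1 * z.2.1 = z.1.2 * z.2.2} ∪
      {z ∈ (A ×ˢ A) ×ˢ X ×ˢ A | z.1.1 * z.2.1 = z.1.2 * z.2.2} ∪
      {z ∈ (A ×ˢ X) ×ˢ A ×ˢ A | z.1.1 * z.2.1 = z.1.2 * z.2.2} ∪
      {z ∈ (X ×ˢ A) ×ˢ A ×ˢ A | z.1.1 * z.2.1 = z.1.2 * z.2.2} ∪
      {z ∈ ((A \ X) ×ˢ (A \ X)) ×ˢ (A \ X) ×ˢ (A \ X) | z.1.1 * z.2.1 = z.1.2 * z.2.2} := by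
    rintro ⟨⟨x, y⟩, u, v⟩ h
    simp only [mem_union, mem_filter, mem_product, mem_sdiff] at h ⊢
    tauto
  refine (card_le_card hsub).trans ?_
  refine (card_union_le _ _).trans (Nat.add_le_add_right ?_ _)
  refine (card_union_le _ _).trans (Nat.add_le_add_right ?_ _)
  refine (card_union_le _ _).trans (Nat.add_le_add_right ?_ _)
  exact card_union_le _ _

theorem mulQuadruples_le_of_zero_notMem (n : ℕ) : ∀ A B : Finset (ZMod p), #A = n → 0 ∉ A →
    #A ^ 2 ≤ p → (B = A ∨ B = -A) →
    (mulQuadruples A A A A : ℝ) ≤ 256 * √√(#A : ℝ) ^ 3 * (#(A + B) : ℝ) ^ 2 := by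
  induction n using Nat.strong_induction_on with
  | _ n ih =>
  intro A B hn h0 hp hB
  obtain rfl | hne := A.eq_empty_or_nonempty
  · simp [mulQuadruples]
  have hBne : B.Nonempty := by rcases hB with rfl | rfl <;> simpa
  obtain ⟨X, hXA, hX2, hX3⟩ := exists_large_subset_card_add_three_le (A := A) hBne
  have hmain := sum_card_inter_le hp hB hXA hX3
  rw [sum_comm, ← mulQuadruples_eq_sum h0 h0] at hmain
  have hc := card_sdiff_add_card_eq_card hXA
  have hpos := hne.card_pos
  obtain ⟨B', hB', hB'B⟩ : ∃ B', (B' = A \ X ∨ B' = -(A \ X)) ∧ B' ⊆ B := by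
    rcases hB with rfl | rfl
    · exact ⟨_, .inl rfl, sdiff_subset⟩
    · exact ⟨_, .inr rfl, neg_subset_neg sdiff_subset⟩
  have hrec := ih #(A \ X) (by omega) (A \ X) B' rfl (fun h ↦ h0 (sdiff_subset h))
    ((Nat.pow_le_pow_left (by omega) 2).trans hp) hB'
  have hS : (#(A \ X + B') : ℝ) ≤ #(A + B) := by
    exact_mod_cast card_le_card (add_subset_add sdiff_subset hB'B)
  have hhalf : √√(#(A \ X) : ℝ) ^ 3 ≤ 3 / 4 * √√(#A : ℝ) ^ 3 := by
    have hcast : (#(A \ X) : ℝ) ≤ #A / 2 := by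
      have : #(A \ X) * 2 ≤ #A := by omega
      rw [le_div_iff₀ (by norm_num)]
      exact_mod_cast this
    refine le_of_pow_le_pow_left₀ (n := 4) (by norm_num) (by positivity) ?_
    calc _ = (√√(#(A \ X) : ℝ) ^ 4) ^ 3 := by ring
      _ = (#(A \ X) : ℝ) ^ 3 := by rw [sqrt_sqrt_pow_four (by positivity)]
      _ ≤ (#A / 2 : ℝ) ^ 3 := by gcongr
      _ ≤ (3 / 4) ^ 4 * (#A : ℝ) ^ 3 := by
        have : (0 : ℝ) ≤ (#A : ℝ) ^ 3 := by positivity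
        rw [div_pow]
        linarith
      _ = (3 / 4) ^ 4 * (√√(#A : ℝ) ^ 4) ^ 3 := by rw [sqrt_sqrt_pow_four (by positivity)]
      _ = _ := by ring
  have hle : (mulQuadruples A A A A : ℝ) ≤ 4 * mulQuadruples A A A X +
      mulQuadruples (A \ X) (A \ X) (A \ X) (A \ X) := by exact_mod_cast mulQuadruples_le A X
  calc _ ≤ _ := hle
    _ ≤ 4 * (16 * √√(#A : ℝ) ^ 3 * (#(A + B) : ℝ) ^ 2) +
        256 * √√(#(A \ X) : ℝ) ^ 3 * (#(A \ X + B') : ℝ) ^ 2 := by gcongr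
    _ ≤ 4 * (16 * √√(#A : ℝ) ^ 3 * (#(A + B) : ℝ) ^ 2) +
        256 * (3 / 4 * √√(#A : ℝ) ^ 3) * (#(A + B) : ℝ) ^ 2 := by gcongr
    _ = _ := by ring

theorem paperMulEnergy_le (A : Finset (ZMod p)) :
    paperMulEnergy A A ≤ #A ^ 2 +
      mulQuadruples (A.erase 0) (A.erase 0) (A.erase 0) (A.erase 0) := by
  set A₀ := A.erase 0 with hA₀
  have h0 : (0 : ZMod p) ∉ A₀ := notMem_erase _ _
  have hfil : A₀ = A.filter (· ≠ 0) := by rw [hA₀, filter_ne']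
  have hpt : ∀ x ∈ A, ∀ y ∈ A, #(A.image (x * ·) ∩ A.image (y * ·)) ≤
      1 + if x ≠ 0 then (if y ≠ 0 then #(x • A₀ ∩ y • A₀) else 0) else 0 := by
    intro x _ y _
    have zero_of {w : ZMod p} (h : w ∈ A.image ((0 : ZMod p) * ·)) : w = 0 := by
      obtain ⟨a, -, rfl⟩ := mem_image.1 h
      exact zero_mul a
    by_cases hx : x = 0
    · subst hx
      refine le_add_right (card_le_one.2 fun a ha b hb ↦ ?_)
      rw [zero_of (mem_inter.1 ha).1, zero_of (mem_inter.1 hb).1]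
    by_cases hy : y = 0
    · subst hy
      refine le_add_right (card_le_one.2 fun a ha b hb ↦ ?_)
      rw [zero_of (mem_inter.1 ha).2, zero_of (mem_inter.1 hb).2]
    rw [if_pos hx, if_pos hy, add_comm]
    refine (card_le_card ?_).trans (card_insert_le 0 _)
    intro w hw
    obtain ⟨h₁, h₂⟩ := mem_inter.1 hw
    obtain ⟨u, hu, rfl⟩ := mem_image.1 h₁
    obtain ⟨v, hv, huv⟩ := mem_image.1 h₂
    rw [mem_insert, or_iff_not_imp_left]
    intro hne
    rw [mem_inter]
    refine ⟨smul_mem_smul_finset (mem_erase.2 ⟨right_ne_zero_of_mul hne, hu⟩), ?_⟩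
    rw [← huv] at hne ⊢
    exact smul_mem_smul_finset (mem_erase.2 ⟨right_ne_zero_of_mul hne, hv⟩)
  rw [mulQuadruples_eq_sum h0 h0]
  calc paperMulEnergy A A ≤ ∑ x ∈ A, ∑ y ∈ A,
        (1 + if x ≠ 0 then (if y ≠ 0 then #(x • A₀ ∩ y • A₀) else 0) else 0) :=
      sum_le_sum fun x hx ↦ sum_le_sum fun y hy ↦ hpt x hx y hy
    _ = #A ^ 2 + ∑ x ∈ A₀, ∑ y ∈ A₀, #(x • A₀ ∩ y • A₀) := by
      simp only [sum_add_distrib]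
      congr 1
      · simp [sq]
      · rw [hfil, sum_filter]
        refine sum_congr rfl fun x _ ↦ ?_
        split_ifs
        · rw [sum_filter]
        · simp

theorem paperMulEnergy_pow_four_le {A B : Finset (ZMod p)} (hA : #A ^ 2 ≤ p)
    (hB : B = A ∨ B = -A) :
    (paperMulEnergy A A : ℝ) ^ 4 ≤ 257 ^ 4 * (#A : ℝ) ^ 3 * (#(A + B) : ℝ) ^ 8 := by
  obtain rfl | hne := A.eq_empty_or_nonempty
  · simp [paperMulEnergy]
  have hBne : B.Nonempty := by rcases hB with rfl | rfl <;> simpa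
  have hAS : (#A : ℝ) ≤ #(A + B) := by exact_mod_cast card_le_card_add_right hBne
  obtain ⟨B', hB', hB'B⟩ : ∃ B', (B' = A.erase 0 ∨ B' = -(A.erase 0)) ∧ B' ⊆ B := by
    rcases hB with rfl | rfl
    · exact ⟨_, .inl rfl, erase_subset _ _⟩
    · exact ⟨_, .inr rfl, neg_subset_neg (erase_subset _ _)⟩
  have hcard : #(A.erase 0) ≤ #A := card_erase_le
  have hq := mulQuadruples_le_of_zero_notMem _ (A.erase 0) B' rfl (notMem_erase _ _)
    ((Nat.pow_le_pow_left hcard 2).trans hA) hB'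
  have hE : (paperMulEnergy A A : ℝ) ≤ (#A : ℝ) ^ 2 +
      mulQuadruples (A.erase 0) (A.erase 0) (A.erase 0) (A.erase 0) := by
    exact_mod_cast paperMulEnergy_le A
  have hu4 : √√(#A : ℝ) ^ 4 = #A := sqrt_sqrt_pow_four (by positivity)
  have hone : 1 ≤ √√(#A : ℝ) := by
    rw [Real.one_le_sqrt, Real.one_le_sqrt]
    exact_mod_cast hne.card_pos
  have hle : (paperMulEnergy A A : ℝ) ≤ 257 * √√(#A : ℝ) ^ 3 * (#(A + B) : ℝ) ^ 2 := by
    have h₁ : (#(A.erase 0 + B') : ℝ) ≤ #(A + B) := by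
      exact_mod_cast card_le_card (add_subset_add (erase_subset _ _) hB'B)
    have h₂ : √√(#(A.erase 0) : ℝ) ≤ √√(#A : ℝ) :=
      Real.sqrt_le_sqrt (Real.sqrt_le_sqrt (by exact_mod_cast hcard))
    calc _ ≤ (#A : ℝ) ^ 2 + 256 * √√(#(A.erase 0) : ℝ) ^ 3 * (#(A.erase 0 + B') : ℝ) ^ 2 :=
          hE.trans (by gcongr)
      _ ≤ 1 * (#(A + B) : ℝ) ^ 2 + 256 * √√(#A : ℝ) ^ 3 * (#(A + B) : ℝ) ^ 2 := by
          rw [one_mul]; gcongr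
      _ ≤ √√(#A : ℝ) ^ 3 * (#(A + B) : ℝ) ^ 2 + 256 * √√(#A : ℝ) ^ 3 * (#(A + B) : ℝ) ^ 2 := by
          gcongr
          exact one_le_pow₀ hone
      _ = _ := by ring
  calc _ ≤ (257 * √√(#A : ℝ) ^ 3 * (#(A + B) : ℝ) ^ 2) ^ 4 := by gcongr
    _ = 257 ^ 4 * (√√(#A : ℝ) ^ 4) ^ 3 * (#(A + B) : ℝ) ^ 8 := by ring
    _ = _ := by rw [hu4]

end Energy

end SumProduct

theorem energy_bound_eight :
    ∃ C : ℝ, 0 < C ∧ ∀ (p : ℕ), p.Prime → ∀ A : Finset (ZMod p),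
      2 ≤ A.card → (A.card : ℝ) ≤ Real.sqrt p →
      (paperMulEnergy A A : ℝ) ^ 4 ≤ C * (A.card : ℝ) ^ 3 * ((A + A).card : ℝ) ^ 8 ∧
      (paperMulEnergy A A : ℝ) ^ 4 ≤ C * (A.card : ℝ) ^ 3 * ((A - A).card : ℝ) ^ 8 := by
  refine ⟨257 ^ 4, by norm_num, fun p hp A _ hA ↦ ?_⟩
  have : Fact p.Prime := ⟨hp⟩
  have hA' : #A ^ 2 ≤ p := by
    rw [Real.le_sqrt (by positivity) (by positivity)] at hA
    exact_mod_cast hA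
  refine ⟨SumProduct.paperMulEnergy_pow_four_le hA' (.inl rfl), ?_⟩
  rw [sub_eq_add_neg]
  exact SumProduct.paperMulEnergy_pow_four_le hA' (.inr rfl)
end
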